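/- arXiv:2208.11528 — 2 statements merged into one kernel-verified Lean document; each statement's English description precedes it below -/
import Mathlib

section
/- Let f be an excursion and (f_n) a sequence of excursions with f_n → f for the Skorokhod topology. If f is a pure jump growth (PJG) excursion, then d_L[f_n] → d_L[f] uniformly on [0,1]² and d_T[f_n] → 0 uniformly on [0,1]²; consequently d_V[f_n] → d_V[f] = 2·d_L[f] uniformly on [0,1]². -/
open Set Filter Topology
open scoped Classical

noncomputable section

/-- Left limit of `f` at `t`, with the convention `f(0−) = 0`. -/
def lm (f : ℝ → ℝ) (t : ℝ) : ℝ := if t = 0 then 0 else Function.leftLim f t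

/-- The jump `Δ_t(f) = f t − f(t−)`. -/
def jump (f : ℝ → ℝ) (t : ℝ) : ℝ := f t - lm f t

/-- `inf_{[s,t]} f`. -/
def infIcc (f : ℝ → ℝ) (s t : ℝ) : ℝ := sInf (f '' Icc s t)

/-- An excursion: a càdlàg function on `[0,1]`, nonnegative, vanishing at `1` (and
extended by `0` outside `[0,1]`), all of whose jumps are nonnegative. -/
structure IsExcursion (f : ℝ → ℝ) : Prop where
  nonneg : ∀ t ∈ Icc (0:ℝ) 1, 0 ≤ f t
  zero_outside : ∀ t, t ∉ Icc (0:ℝ) 1 → f t = 0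
  rightCont : ∀ t ∈ Ico (0:ℝ) 1, Tendsto f (𝓝[>] t) (𝓝 (f t))
  leftLimEx : ∀ t ∈ Ioc (0:ℝ) 1, Tendsto f (𝓝[<] t) (𝓝 (Function.leftLim f t))
  one : f 1 = 0
  jump_nonneg : ∀ t ∈ Icc (0:ℝ) 1, 0 ≤ jump f t

/-- The genealogical relation `s ⪯_f t` : `s ≤ t` and `f(s−) ≤ inf_{[s,t]} f`. -/
def pre (f : ℝ → ℝ) (s t : ℝ) : Prop := s ≤ t ∧ lm f s ≤ infIcc f s t

/-- `x_s^t(f) = 1_{s ≤ t} · max(inf_{[s,t]} f − f(s−), 0)`. -/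
def xst (f : ℝ → ℝ) (s t : ℝ) : ℝ := if s ≤ t then max (infIcc f s t - lm f s) 0 else 0

/-- The most recent common ancestor `s ∧_f t`. -/
def mrca (f : ℝ → ℝ) (s t : ℝ) : ℝ := sSup {r : ℝ | 0 ≤ r ∧ pre f r s ∧ pre f r t}

/-- `δ_t(a,b) = min(|a−b|, Δ_t(f) − |a−b|)`, the circle pseudo-distance on `[0, Δ_t(f)]`. -/
def cdel (f : ℝ → ℝ) (t a b : ℝ) : ℝ := min |a - b| (jump f t - |a - b|)

/-- `d_O(s,t) = ∑_{s ≺_f r ⪯_f t} δ_r(0, x_r^t)`. -/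
def dO (f : ℝ → ℝ) (s t : ℝ) : ℝ :=
  ∑' r : ℝ, if pre f s r ∧ s < r ∧ pre f r t then cdel f r 0 (xst f r t) else 0

/-- `d_T(s,t) = f t − inf_{[s,t]} f − ∑_{s ≺_f r ⪯_f t} x_r^t`, intended for `s ⪯_f t`. -/
def dTanc (f : ℝ → ℝ) (s t : ℝ) : ℝ :=
  f t - infIcc f s t - ∑' r : ℝ, if pre f s r ∧ s < r ∧ pre f r t then xst f r t else 0

/-- The looptree pseudo-distance `d_L[f]`. -/
def dL (f : ℝ → ℝ) (s t : ℝ) : ℝ :=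
  cdel f (mrca f s t) (xst f (mrca f s t) s) (xst f (mrca f s t) t)
    + dO f (mrca f s t) s + dO f (mrca f s t) t

/-- The tree pseudo-distance `d_T[f]`. -/
def dT (f : ℝ → ℝ) (s t : ℝ) : ℝ := dTanc f (mrca f s t) s + dTanc f (mrca f s t) t

/-- The vernation pseudo-distance `d_V[f] = d_T[f] + 2·d_L[f]`. -/
def dV (f : ℝ → ℝ) (s t : ℝ) : ℝ := dT f s t + 2 * dL f s t

/-- `Jf(t) = ∑_{r ⪯_f t} x_r^t(f)`. -/
def Jop (f : ℝ → ℝ) (t : ℝ) : ℝ := ∑' r : ℝ, if pre f r t then xst f r t else 0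

/-- `J^ε f(t) = ∑_{r ⪯_f t, Δ_r(f) ≥ ε} x_r^t(f)`. -/
def Jeps (f : ℝ → ℝ) (ε : ℝ) (t : ℝ) : ℝ :=
  ∑' r : ℝ, if pre f r t ∧ ε ≤ jump f r then xst f r t else 0

/-- Pure jump growth (PJG) excursion: `f(t) = ∑_{r ⪯_f t} x_r^t(f)` on `[0,1]`. -/
def IsPJG (f : ℝ → ℝ) : Prop := ∀ t ∈ Icc (0:ℝ) 1, f t = Jop f t

/-- An increasing bijection from `[0,1]` onto itself. -/
def IncBij (l : ℝ → ℝ) : Prop :=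
  StrictMonoOn l (Icc (0:ℝ) 1) ∧ Set.BijOn l (Icc (0:ℝ) 1) (Icc (0:ℝ) 1)

/-- The Skorokhod distance `ρ` on functions `[0,1] → ℝ`. -/
def skor (f g : ℝ → ℝ) : ℝ :=
  sInf {c : ℝ | 0 ≤ c ∧ ∃ l : ℝ → ℝ, IncBij l ∧
    ∀ x ∈ Icc (0:ℝ) 1, |l x - x| ≤ c ∧ |f x - g (l x)| ≤ c}

/-!
For an excursion, the looptree distance is a sum over *all* loops `r`: `d_L(s,t)` is the sum of the
distances on the circle of length `Δ_r` between the projections `x_r^s` and `x_r^t`, because below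
the common ancestor the projections agree and above it at most one of them is nonzero. Projections
onto the loops of a finite set `R` therefore determine `d_L(s,t)` and `d_T(s,t)` up to the heights
of `s` and `t` that the jumps in `R` leave unexplained. For a pure jump growth excursion this
residual decreases to `0` pointwise as `R` grows, and by a Dini argument uniformly, since it is
continuous at every `t ∈ R`. Along a Skorokhod time change `e` finitely many projections, hence also
the residual, are moved by a multiple of the Skorokhod error, so `d_T[g]` is small and `d_L[g]` is
uniformly close to `d_L[f] ∘ (e × e)`. Finally `d_L[f]` is continuous, being a uniform limit of
finite sums of continuous circle distances, and this removes the time change.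
-/

/-! ### Infima over intervals -/

section InfIcc

variable {f : ℝ → ℝ} {a b c r t : ℝ}

lemma le_infIcc (hab : a ≤ b) (h : ∀ z ∈ Icc a b, c ≤ f z) : c ≤ infIcc f a b :=
  le_csInf ((nonempty_Icc.mpr hab).image f) (forall_mem_image.mpr h)

lemma infIcc_self (f : ℝ → ℝ) (a : ℝ) : infIcc f a a = f a := by
  rw [infIcc, Icc_self, image_singleton, csInf_singleton]

lemma infIcc_le (hf : BddBelow (range f)) (ht : t ∈ Icc a b) : infIcc f a b ≤ f t :=
  csInf_le (hf.mono (image_subset_range f _)) (mem_image_of_mem f ht)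

lemma infIcc_mono_left (hf : BddBelow (range f)) (hab : a ≤ b) (hbc : b ≤ c) :
    infIcc f a c ≤ infIcc f b c :=
  le_infIcc hbc fun _ hz => infIcc_le hf ⟨hab.trans hz.1, hz.2⟩

lemma infIcc_anti_right (hf : BddBelow (range f)) (hab : a ≤ b) (hbc : b ≤ c) :
    infIcc f a c ≤ infIcc f a b :=
  le_infIcc hab fun _ hz => infIcc_le hf ⟨hz.1, hz.2.trans hbc⟩

lemma abs_infIcc_sub_infIcc_le {g : ℝ → ℝ} {e : ℝ ≃o ℝ} (hf : BddBelow (range f))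
    (hg : BddBelow (range g)) (h : ∀ x, |g x - f (e x)| ≤ c) (hab : a ≤ b) :
    |infIcc g a b - infIcc f (e a) (e b)| ≤ c := by
  have lower : infIcc f (e a) (e b) - c ≤ infIcc g a b := le_infIcc hab fun z hz => by
    have := infIcc_le hf (⟨e.monotone hz.1, e.monotone hz.2⟩ : e z ∈ Icc (e a) (e b))
    linarith [(abs_le.mp (h z)).1]
  have upper : infIcc g a b - c ≤ infIcc f (e a) (e b) :=
    le_infIcc (e.monotone hab) fun z hz => by
      obtain ⟨y, rfl⟩ := e.surjective z
      have := infIcc_le hg (⟨e.le_iff_le.mp hz.1, e.le_iff_le.mp hz.2⟩ : y ∈ Icc a b)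
      linarith [(abs_le.mp (h y)).2]
  exact abs_le.mpr ⟨by linarith, by linarith⟩

end InfIcc

/-! ### Projections and circle distances -/

section Projection

variable {f : ℝ → ℝ} {r s t : ℝ}

lemma xst_of_le (h : r ≤ t) : xst f r t = max (infIcc f r t - lm f r) 0 :=
  if_pos h

lemma xst_of_lt (h : t < r) : xst f r t = 0 :=
  if_neg h.not_ge

lemma xst_nonneg (f : ℝ → ℝ) (r t : ℝ) : 0 ≤ xst f r t := by
  unfold xst
  split_ifs
  exacts [le_max_right _ _, le_rfl]

lemma xst_eq_zero_of_not_pre (h : ¬ pre f r t) : xst f r t = 0 := by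
  rcases lt_or_ge t r with htr | hrt
  · exact xst_of_lt htr
  · have hlt : infIcc f r t < lm f r := not_le.mp fun hle => h ⟨hrt, hle⟩
    rw [xst_of_le hrt, max_eq_right (sub_nonpos.mpr hlt.le)]

lemma cdel_comm (f : ℝ → ℝ) (r a b : ℝ) : cdel f r a b = cdel f r b a := by
  simp only [cdel, abs_sub_comm a b]

lemma cdel_self (hr : 0 ≤ jump f r) (a : ℝ) : cdel f r a a = 0 := by
  simp only [cdel, sub_self, abs_zero, sub_zero, min_eq_left hr]

lemma cdel_nonneg {a b : ℝ} (ha : a ∈ Icc 0 (jump f r)) (hb : b ∈ Icc 0 (jump f r)) :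
    0 ≤ cdel f r a b :=
  le_min (abs_nonneg _)
    (sub_nonneg.mpr (abs_le.mpr ⟨by linarith [ha.1, hb.2], by linarith [ha.2, hb.1]⟩))

lemma cdel_le_add {a b : ℝ} (ha : 0 ≤ a) (hb : 0 ≤ b) : cdel f r a b ≤ a + b :=
  (min_le_left _ _).trans (abs_le.mpr ⟨by linarith, by linarith⟩)

lemma cdel_jump_left {b : ℝ} (hb : b ∈ Icc 0 (jump f r)) :
    cdel f r (jump f r) b = cdel f r 0 b := by
  rw [cdel, cdel, abs_of_nonneg (sub_nonneg.mpr hb.2), zero_sub, abs_neg, abs_of_nonneg hb.1,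
    sub_sub_cancel, min_comm]

lemma continuous_cdel (f : ℝ → ℝ) (r : ℝ) : Continuous fun p : ℝ × ℝ => cdel f r p.1 p.2 := by
  unfold cdel
  fun_prop

lemma abs_cdel_sub_cdel_le (f g : ℝ → ℝ) (q r a b a' b' : ℝ) :
    |cdel g q a b - cdel f r a' b'| ≤ |jump g q - jump f r| + (|a - a'| + |b - b'|) := by
  have chord : |(|a - b| - |a' - b'|)| ≤ |a - a'| + |b - b'| := by
    refine (abs_abs_sub_abs_le _ _).trans ?_
    rw [sub_sub_sub_comm]
    exact abs_sub _ _
  refine (abs_min_sub_min_le_max _ _ _ _).trans (max_le ?_ ?_)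
  · exact chord.trans (le_add_of_nonneg_left (abs_nonneg _))
  · rw [sub_sub_sub_comm]
    exact (abs_sub _ _).trans (by gcongr)

/-- The distance on the loop `r` between the projections of `s` and `t`. Points which do not
descend from `r` project to the root `0` of the loop. -/
def loopDist (f : ℝ → ℝ) (r s t : ℝ) : ℝ := cdel f r (xst f r s) (xst f r t)

lemma loopDist_le_add (f : ℝ → ℝ) (r s t : ℝ) : loopDist f r s t ≤ xst f r s + xst f r t :=
  cdel_le_add (xst_nonneg f r s) (xst_nonneg f r t)

/-- The part of the height of `t` that is not explained by the jumps at the times of `R`. -/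
def jumpResidual (f : ℝ → ℝ) (R : Finset ℝ) (t : ℝ) : ℝ := f t - ∑ r ∈ R, xst f r t

lemma jumpResidual_antitone (f : ℝ → ℝ) (t : ℝ) : Antitone fun R => jumpResidual f R t :=
  fun _ _ hRS => sub_le_sub_left
    (Finset.sum_le_sum_of_subset_of_nonneg hRS fun r _ _ => xst_nonneg f r t) _

end Projection

namespace IsExcursion

variable {f : ℝ → ℝ} {m r s t : ℝ}

/-! ### Regularity of excursions -/

lemma apply_nonneg (hf : IsExcursion f) (t : ℝ) : 0 ≤ f t := by
  by_cases ht : t ∈ Icc (0 : ℝ) 1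
  exacts [hf.nonneg t ht, (hf.zero_outside t ht).ge]

lemma bddBelow_range (hf : IsExcursion f) : BddBelow (range f) :=
  ⟨0, forall_mem_range.mpr hf.apply_nonneg⟩

lemma eq_zero_of_neg (hf : IsExcursion f) (ht : t < 0) : f t = 0 :=
  hf.zero_outside t fun h => h.1.not_gt ht

lemma eq_zero_of_one_le (hf : IsExcursion f) (ht : 1 ≤ t) : f t = 0 := by
  rcases ht.eq_or_lt with rfl | ht
  exacts [hf.one, hf.zero_outside t fun h => h.2.not_gt ht]

lemma continuousWithinAt_Ici (hf : IsExcursion f) (t : ℝ) : ContinuousWithinAt f (Ici t) t := by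
  rw [← continuousWithinAt_Ioi_iff_Ici]
  rcases lt_or_ge t 0 with h0 | h0
  · have hzero : f =ᶠ[𝓝 t] fun _ => 0 := by
      filter_upwards [Iio_mem_nhds h0] with x hx using hf.eq_zero_of_neg hx
    exact (continuousAt_const.congr hzero.symm).continuousWithinAt
  rcases lt_or_ge t 1 with h1 | h1
  · exact hf.rightCont t ⟨h0, h1⟩
  · exact continuousWithinAt_const.congr
      (fun x hx => hf.eq_zero_of_one_le (h1.trans (le_of_lt hx))) (hf.eq_zero_of_one_le h1)

lemma tendsto_nhdsLT_zero (hf : IsExcursion f) (ht : t ∉ Ioc 0 1) :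
    Tendsto f (𝓝[<] t) (𝓝 0) := by
  refine tendsto_const_nhds.congr' (EventuallyEq.symm ?_)
  rcases le_or_gt t 0 with h | h
  · filter_upwards [self_mem_nhdsWithin] with x hx using hf.eq_zero_of_neg (lt_of_lt_of_le hx h)
  · have h1 : 1 < t := not_le.mp fun hle => ht ⟨h, hle⟩
    filter_upwards [mem_nhdsWithin_of_mem_nhds (Ioi_mem_nhds h1)] with x hx
    exact hf.eq_zero_of_one_le (le_of_lt hx)

lemma tendsto_nhdsLT_lm (hf : IsExcursion f) (t : ℝ) : Tendsto f (𝓝[<] t) (𝓝 (lm f t)) := by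
  unfold lm
  split_ifs with h0
  · exact hf.tendsto_nhdsLT_zero fun h => h.1.ne' h0
  by_cases ht : t ∈ Ioc (0 : ℝ) 1
  · exact hf.leftLimEx t ht
  · have := hf.tendsto_nhdsLT_zero ht
    rwa [leftLim_eq_of_tendsto this]

lemma lm_le (hf : IsExcursion f) (t : ℝ) : lm f t ≤ f t := by
  by_cases ht : t ∈ Icc (0 : ℝ) 1
  · exact sub_nonneg.mp (hf.jump_nonneg t ht)
  · rw [tendsto_nhds_unique (hf.tendsto_nhdsLT_lm t)
      (hf.tendsto_nhdsLT_zero fun h => ht (Ioc_subset_Icc_self h))]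
    exact hf.apply_nonneg t

lemma zero_le_jump (hf : IsExcursion f) (t : ℝ) : 0 ≤ jump f t :=
  sub_nonneg.mpr (hf.lm_le t)

lemma infIcc_nonneg (hf : IsExcursion f) (hst : s ≤ t) : 0 ≤ infIcc f s t :=
  le_infIcc hst fun z _ => hf.apply_nonneg z

lemma infIcc_le_lm (hf : IsExcursion f) (hsr : s < r) (hrt : r ≤ t) : infIcc f s t ≤ lm f r := by
  refine ge_of_tendsto (hf.tendsto_nhdsLT_lm r) ?_
  filter_upwards [Ioo_mem_nhdsLT hsr] with x hx
  exact infIcc_le hf.bddBelow_range ⟨hx.1.le, hx.2.le.trans hrt⟩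

lemma xst_self (hf : IsExcursion f) (t : ℝ) : xst f t t = jump f t := by
  rw [xst_of_le le_rfl, infIcc_self]
  exact max_eq_left (hf.zero_le_jump t)

lemma xst_mem_Icc (hf : IsExcursion f) (r t : ℝ) : xst f r t ∈ Icc 0 (jump f r) := by
  refine ⟨xst_nonneg f r t, ?_⟩
  rcases lt_or_ge t r with h | h
  · exact (xst_of_lt h).trans_le (hf.zero_le_jump r)
  · rw [xst_of_le h]
    exact max_le (sub_le_sub_right (infIcc_le hf.bddBelow_range ⟨le_rfl, h⟩) _)
      (hf.zero_le_jump r)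

/-! ### Projections along an ancestral line -/

lemma xst_le_infIcc_sub (hf : IsExcursion f) (hsr : s < r) (hrt : r ≤ t) :
    xst f r t ≤ infIcc f r t - infIcc f s t := by
  rw [xst_of_le hrt]
  exact max_le (sub_le_sub_left (hf.infIcc_le_lm hsr hrt) _)
    (sub_nonneg.mpr (infIcc_mono_left hf.bddBelow_range hsr.le hrt))

/-- Along an ancestral line the projections `x_r^t` are lengths of disjoint intervals. -/
lemma sum_xst_le_infIcc_sub (hf : IsExcursion f) {a : ℝ} (hat : a ≤ t) (A : Finset ℝ) :
    ∀ q ≤ a, (∀ r ∈ A, r ∈ Ioc q a) → ∑ r ∈ A, xst f r t ≤ infIcc f a t - infIcc f q t := by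
  induction A using Finset.induction_on_min with
  | empty =>
    intro q hqa _
    simpa using infIcc_mono_left hf.bddBelow_range hqa hat
  | insert b A hb ih =>
    intro q _ hA
    obtain ⟨⟨hqb, hba⟩, hA⟩ := Finset.forall_mem_insert _ _ _ |>.mp hA
    rw [Finset.sum_insert fun h => (hb b h).false]
    have hsum := ih b hba fun r hr => ⟨hb r hr, (hA r hr).2⟩
    have hfirst := hf.xst_le_infIcc_sub hqb (hba.trans hat)
    linarith

lemma sum_xst_le_infIcc (hf : IsExcursion f) {a : ℝ} (hat : a ≤ t) {A : Finset ℝ}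
    (hA : ∀ r ∈ A, r ≤ a) : ∑ r ∈ A, xst f r t ≤ infIcc f a t := by
  obtain ⟨q, hq⟩ := (insert a A).bddBelow
  have hqa : q - 1 ≤ a := by linarith [hq (Finset.mem_insert_self a A)]
  have hsum := hf.sum_xst_le_infIcc_sub hat A (q - 1) hqa fun r hr =>
    ⟨by linarith [hq (Finset.mem_insert_of_mem hr)], hA r hr⟩
  linarith [hf.infIcc_nonneg (hqa.trans hat)]

lemma sum_xst_le_sub_infIcc (hf : IsExcursion f) (hst : s ≤ t) {A : Finset ℝ}
    (hA : ∀ r ∈ A, s < r) : ∑ r ∈ A, xst f r t ≤ f t - infIcc f s t := by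
  rw [← infIcc_self f t, ← Finset.sum_filter_of_ne (p := (· ≤ t)) fun r _ hr =>
    not_lt.mp fun h => hr (xst_of_lt h)]
  refine hf.sum_xst_le_infIcc_sub le_rfl _ s hst fun r hr => ?_
  rw [Finset.mem_filter] at hr
  exact ⟨hA r hr.1, hr.2⟩

lemma sum_xst_le (hf : IsExcursion f) (t : ℝ) (A : Finset ℝ) : ∑ r ∈ A, xst f r t ≤ f t := by
  obtain ⟨q, hq⟩ := (insert t A).bddBelow
  have hqt : q - 1 ≤ t := by linarith [hq (Finset.mem_insert_self t A)]
  have hsum := hf.sum_xst_le_sub_infIcc hqt (A := A) fun r hr => by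
    linarith [hq (Finset.mem_insert_of_mem hr)]
  linarith [hf.infIcc_nonneg hqt]

lemma summable_xst (hf : IsExcursion f) (t : ℝ) : Summable fun r => xst f r t :=
  summable_of_sum_le (fun r => xst_nonneg f r t) (hf.sum_xst_le t)

lemma tsum_xst_le (hf : IsExcursion f) (t : ℝ) : ∑' r, xst f r t ≤ f t :=
  (hf.summable_xst t).tsum_le_of_sum_le (hf.sum_xst_le t)

/-! ### The most recent common ancestor -/

lemma pre_of_le (hf : IsExcursion f) (h : pre f r t) (hrs : r ≤ s) (hst : s ≤ t) : pre f r s :=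
  ⟨hrs, h.2.trans (infIcc_anti_right hf.bddBelow_range hrs hst)⟩

lemma pre_zero (hf : IsExcursion f) (ht : 0 ≤ t) : pre f 0 t :=
  ⟨ht, (if_pos rfl : lm f 0 = 0).trans_le (hf.infIcc_nonneg ht)⟩

lemma pre_of_isLUB (hf : IsExcursion f) {S : Set ℝ} (hm : IsLUB S m)
    (hpre : ∀ r ∈ S, pre f r t) : pre f m t := by
  have hmt : m ≤ t := hm.2 fun r hr => (hpre r hr).1
  refine ⟨hmt, le_infIcc hmt fun z hz => le_of_forall_lt_imp_le_of_dense fun c hc => ?_⟩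
  obtain ⟨a, ha : a < m, hac⟩ := mem_nhdsLT_iff_exists_Ioo_subset.mp
    ((hf.tendsto_nhdsLT_lm m).eventually (lt_mem_nhds hc))
  obtain ⟨r, hrS, har, hrm⟩ := hm.exists_between ha
  calc c ≤ lm f r := by
        refine ge_of_tendsto (hf.tendsto_nhdsLT_lm r) ?_
        filter_upwards [Ioo_mem_nhdsLT har] with x hx
        exact le_of_lt (hac ⟨hx.1, hx.2.trans_le hrm⟩)
    _ ≤ infIcc f r t := (hpre r hrS).2
    _ ≤ f z := infIcc_le hf.bddBelow_range ⟨hrm.trans hz.1, hz.2⟩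

lemma isGreatest_mrca (hf : IsExcursion f) (hs : 0 ≤ s) (ht : 0 ≤ t) :
    IsGreatest {r : ℝ | 0 ≤ r ∧ pre f r s ∧ pre f r t} (mrca f s t) := by
  have hne : {r : ℝ | 0 ≤ r ∧ pre f r s ∧ pre f r t}.Nonempty :=
    ⟨0, le_rfl, hf.pre_zero hs, hf.pre_zero ht⟩
  have hlub : IsLUB {r : ℝ | 0 ≤ r ∧ pre f r s ∧ pre f r t} (mrca f s t) :=
    isLUB_csSup hne ⟨s, fun r hr => hr.2.1.1⟩
  exact ⟨⟨hlub.1 hne.some_mem |>.trans' hne.some_mem.1,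
    hf.pre_of_isLUB hlub fun r hr => hr.2.1,
    hf.pre_of_isLUB hlub fun r hr => hr.2.2⟩, hlub.1⟩

lemma pre_mrca_left (hf : IsExcursion f) (hs : 0 ≤ s) (ht : 0 ≤ t) : pre f (mrca f s t) s :=
  (hf.isGreatest_mrca hs ht).1.2.1

lemma pre_mrca_right (hf : IsExcursion f) (hs : 0 ≤ s) (ht : 0 ≤ t) : pre f (mrca f s t) t :=
  (hf.isGreatest_mrca hs ht).1.2.2

lemma not_pre_and_pre_of_mrca_lt (hf : IsExcursion f) (hs : 0 ≤ s) (ht : 0 ≤ t)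
    (hr : mrca f s t < r) : ¬ (pre f r s ∧ pre f r t) := fun h =>
  have hmax := hf.isGreatest_mrca hs ht
  (hmax.2 ⟨hmax.1.1.trans hr.le, h⟩).not_gt hr

lemma infIcc_le_infIcc_of_pre (hf : IsExcursion f) (hms : m ≤ s) (hmt : pre f m t)
    (hr : r < m) : infIcc f r s ≤ infIcc f r t := by
  refine le_infIcc (hr.le.trans hmt.1) fun z hz => ?_
  rcases lt_or_ge z m with hzm | hzm
  · exact infIcc_le hf.bddBelow_range ⟨hz.1, hzm.le.trans hms⟩
  · calc infIcc f r s ≤ lm f m := hf.infIcc_le_lm hr hms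
      _ ≤ infIcc f m t := hmt.2
      _ ≤ f z := infIcc_le hf.bddBelow_range ⟨hzm, hz.2⟩

lemma xst_eq_xst_of_pre (hf : IsExcursion f) (hms : pre f m s) (hmt : pre f m t) (hr : r < m) :
    xst f r s = xst f r t := by
  rw [xst_of_le (hr.le.trans hms.1), xst_of_le (hr.le.trans hmt.1),
    (hf.infIcc_le_infIcc_of_pre hms.1 hmt hr).antisymm (hf.infIcc_le_infIcc_of_pre hmt.1 hms hr)]

lemma ite_pre_eq_indicator (hf : IsExcursion f) (hm : pre f m t) {φ : ℝ → ℝ}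
    (hφ : ∀ r, ¬ pre f r t → φ r = 0) :
    (fun r => if pre f m r ∧ m < r ∧ pre f r t then φ r else 0) = (Ioi m).indicator φ := by
  ext r
  by_cases hmr : m < r
  · rw [indicator_of_mem (mem_Ioi.mpr hmr)]
    by_cases hrt : pre f r t
    · rw [if_pos ⟨hf.pre_of_le hm hmr.le hrt.1, hmr, hrt⟩]
    · rw [if_neg fun h => hrt h.2.2, hφ r hrt]
  · rw [indicator_of_notMem (show r ∉ Ioi m from hmr), if_neg fun h => hmr h.2.1]

/-! ### Distances as sums over loops -/

lemma loopDist_nonneg (hf : IsExcursion f) (r s t : ℝ) : 0 ≤ loopDist f r s t :=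
  cdel_nonneg (hf.xst_mem_Icc r s) (hf.xst_mem_Icc r t)

lemma summable_loopDist (hf : IsExcursion f) (s t : ℝ) : Summable fun r => loopDist f r s t :=
  .of_nonneg_of_le (fun r => hf.loopDist_nonneg r s t)
    (fun r => loopDist_le_add f r s t)
    ((hf.summable_xst s).add (hf.summable_xst t))

lemma cdel_zero_xst_of_not_pre (hf : IsExcursion f) (h : ¬ pre f r t) :
    cdel f r 0 (xst f r t) = 0 := by
  rw [xst_eq_zero_of_not_pre h, cdel_self (hf.zero_le_jump r)]

lemma summable_cdel_zero_xst (hf : IsExcursion f) (t : ℝ) :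
    Summable fun r => cdel f r 0 (xst f r t) :=
  .of_nonneg_of_le
    (fun r => cdel_nonneg ⟨le_rfl, hf.zero_le_jump r⟩ (hf.xst_mem_Icc r t))
    (fun r => (cdel_le_add le_rfl (xst_nonneg f r t)).trans_eq (zero_add _)) (hf.summable_xst t)

lemma dO_eq_tsum_indicator (hf : IsExcursion f) (hm : pre f m t) :
    dO f m t = ∑' r, (Ioi m).indicator (fun r => cdel f r 0 (xst f r t)) r := by
  rw [dO, hf.ite_pre_eq_indicator hm fun r => hf.cdel_zero_xst_of_not_pre]

lemma loopDist_eq_add_indicator (hf : IsExcursion f) (hs : 0 ≤ s) (ht : 0 ≤ t) (r : ℝ) :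
    loopDist f r s t =
      (Pi.single (mrca f s t) (loopDist f (mrca f s t) s t) : ℝ → ℝ) r
      + (Ioi (mrca f s t)).indicator (fun r => cdel f r 0 (xst f r s)) r
      + (Ioi (mrca f s t)).indicator (fun r => cdel f r 0 (xst f r t)) r := by
  rcases lt_trichotomy r (mrca f s t) with hr | rfl | hr
  · rw [loopDist, hf.xst_eq_xst_of_pre (hf.pre_mrca_left hs ht) (hf.pre_mrca_right hs ht) hr,
      cdel_self (hf.zero_le_jump r)]
    simp [hr.ne, hr.le]
  · simp
  · have hzero := not_and_or.mp (hf.not_pre_and_pre_of_mrca_lt hs ht hr)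
    simp only [Pi.single_eq_of_ne hr.ne', indicator_of_mem (mem_Ioi.mpr hr), zero_add]
    rcases hzero with h | h
    · rw [hf.cdel_zero_xst_of_not_pre h, loopDist, xst_eq_zero_of_not_pre h, zero_add]
    · rw [hf.cdel_zero_xst_of_not_pre h, loopDist, xst_eq_zero_of_not_pre h, cdel_comm, add_zero]

lemma dL_eq_tsum_loopDist (hf : IsExcursion f) (hs : 0 ≤ s) (ht : 0 ≤ t) :
    dL f s t = ∑' r, loopDist f r s t := by
  have hsingle := hasSum_pi_single (mrca f s t) (loopDist f (mrca f s t) s t)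
  have hsums := (hf.summable_cdel_zero_xst s).indicator (Ioi (mrca f s t))
  have hsumt := (hf.summable_cdel_zero_xst t).indicator (Ioi (mrca f s t))
  rw [tsum_congr (hf.loopDist_eq_add_indicator hs ht),
    (hsingle.summable.add hsums).tsum_add hsumt, hsingle.summable.tsum_add hsums, hsingle.tsum_eq,
    ← hf.dO_eq_tsum_indicator (hf.pre_mrca_left hs ht),
    ← hf.dO_eq_tsum_indicator (hf.pre_mrca_right hs ht)]
  rfl

lemma abs_dL_sub_sum_loopDist_le (hf : IsExcursion f) (hs : 0 ≤ s) (ht : 0 ≤ t) (R : Finset ℝ) :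
    |dL f s t - ∑ r ∈ R, loopDist f r s t| ≤ jumpResidual f R s + jumpResidual f R t := by
  have hxs := hf.summable_xst s
  have hxt := hf.summable_xst t
  have hloop := hf.summable_loopDist s t
  have lower := hloop.sum_le_tsum R fun r _ => hf.loopDist_nonneg r s t
  have upper := ((hxs.add hxt).sub hloop).sum_le_tsum R fun r _ =>
    sub_nonneg.mpr (loopDist_le_add f r s t)
  rw [(hxs.add hxt).tsum_sub hloop, hxs.tsum_add hxt, Finset.sum_sub_distrib,
    Finset.sum_add_distrib] at upper
  rw [hf.dL_eq_tsum_loopDist hs ht, abs_of_nonneg (sub_nonneg.mpr lower), jumpResidual,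
    jumpResidual]
  linarith [hf.tsum_xst_le s, hf.tsum_xst_le t]

lemma dTanc_eq_sub_tsum_indicator (hf : IsExcursion f) (hm : pre f m t) :
    dTanc f m t = f t - infIcc f m t - ∑' r, (Ioi m).indicator (fun r => xst f r t) r := by
  rw [dTanc, hf.ite_pre_eq_indicator hm fun r => xst_eq_zero_of_not_pre]

lemma dTanc_nonneg (hf : IsExcursion f) (hm : pre f m t) : 0 ≤ dTanc f m t := by
  rw [hf.dTanc_eq_sub_tsum_indicator hm, sub_nonneg]
  refine ((hf.summable_xst t).indicator (Ioi m)).tsum_le_of_sum_le fun A => ?_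
  rw [Finset.sum_indicator_eq_sum_filter]
  exact hf.sum_xst_le_sub_infIcc hm.1 fun r hr => (Finset.mem_filter.mp hr).2

lemma dTanc_le_jumpResidual (hf : IsExcursion f) (hm : pre f m t) (R : Finset ℝ) :
    dTanc f m t ≤ jumpResidual f R t := by
  have above := ((hf.summable_xst t).indicator (Ioi m)).sum_le_tsum R fun r _ =>
    indicator_nonneg (fun r _ => xst_nonneg f r t) r
  have below := hf.sum_xst_le_infIcc hm.1 (A := R.filter fun r => ¬ m < r)
    fun r hr => not_lt.mp (Finset.mem_filter.mp hr).2
  rw [Finset.sum_indicator_eq_sum_filter] at above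
  have split := Finset.sum_filter_add_sum_filter_not R (m < ·) fun r => xst f r t
  simp only [mem_Ioi] at above
  rw [hf.dTanc_eq_sub_tsum_indicator hm, jumpResidual]
  linarith

lemma dT_nonneg (hf : IsExcursion f) (hs : 0 ≤ s) (ht : 0 ≤ t) : 0 ≤ dT f s t :=
  add_nonneg (hf.dTanc_nonneg (hf.pre_mrca_left hs ht))
    (hf.dTanc_nonneg (hf.pre_mrca_right hs ht))

lemma dT_le_jumpResidual_add_jumpResidual (hf : IsExcursion f) (hs : 0 ≤ s) (ht : 0 ≤ t)
    (R : Finset ℝ) : dT f s t ≤ jumpResidual f R s + jumpResidual f R t :=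
  add_le_add (hf.dTanc_le_jumpResidual (hf.pre_mrca_left hs ht) R)
    (hf.dTanc_le_jumpResidual (hf.pre_mrca_right hs ht) R)

/-! ### Continuity of projections -/

lemma exists_gt_lt_infIcc (hf : IsExcursion f) {a : ℝ} (hrt : r ≤ t) (ha : a < infIcc f r t) :
    ∃ u > t, a < infIcc f r u := by
  obtain ⟨b, hab, hb⟩ := exists_between ha
  have hbt : b < f t := hb.trans_le (infIcc_le hf.bddBelow_range ⟨hrt, le_rfl⟩)
  obtain ⟨u, htu : t < u, hu⟩ := mem_nhdsGT_iff_exists_Ioc_subset.mp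
    ((continuousWithinAt_Ioi_iff_Ici.mpr (hf.continuousWithinAt_Ici t)).eventually
      (lt_mem_nhds hbt))
  refine ⟨u, htu, hab.trans_le (le_infIcc (hrt.trans htu.le) fun z hz => ?_)⟩
  rcases le_or_gt z t with hzt | htz
  · exact hb.le.trans (infIcc_le hf.bddBelow_range ⟨hz.1, hzt⟩)
  · exact le_of_lt (hu ⟨htz, hz.2⟩)

/-- Jumping upwards, `f` cannot attain a new infimum at a jump time. -/
lemma exists_lt_infIcc_lt (hf : IsExcursion f) {a : ℝ} (hrt : r < t) (ha : infIcc f r t < a) :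
    ∃ u ∈ Ico r t, infIcc f r u < a := by
  suffices ∃ u ∈ Ico r t, f u < a by
    obtain ⟨u, hu, hua⟩ := this
    exact ⟨u, hu, (infIcc_le hf.bddBelow_range ⟨hu.1, le_rfl⟩).trans_lt hua⟩
  obtain ⟨_, ⟨z, hz, rfl⟩, hza⟩ := exists_lt_of_csInf_lt ((nonempty_Icc.mpr hrt.le).image f) ha
  rcases hz.2.lt_or_eq with hzt | rfl
  · exact ⟨z, ⟨hz.1, hzt⟩, hza⟩
  · obtain ⟨u, hua, hu⟩ := (((hf.tendsto_nhdsLT_lm z).eventually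
      (gt_mem_nhds ((hf.lm_le z).trans_lt hza))).and (Ioo_mem_nhdsLT hrt)).exists
    exact ⟨u, Ioo_subset_Ico_self hu, hua⟩

lemma continuousOn_infIcc (hf : IsExcursion f) (r : ℝ) : ContinuousOn (infIcc f r) (Ici r) := by
  have anti : AntitoneOn (infIcc f r) (Ici r) :=
    fun u hu v _ huv => infIcc_anti_right hf.bddBelow_range hu huv
  intro t (hrt : r ≤ t)
  refine tendsto_order.mpr ⟨fun a ha => ?_, fun a ha => ?_⟩
  · obtain ⟨u, htu, hau⟩ := hf.exists_gt_lt_infIcc hrt ha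
    filter_upwards [self_mem_nhdsWithin, mem_nhdsWithin_of_mem_nhds (Iio_mem_nhds htu)]
      with x hx hxu
    exact hau.trans_le (anti hx (hrt.trans htu.le) (le_of_lt hxu))
  · rcases hrt.eq_or_lt with rfl | hrt
    · filter_upwards [self_mem_nhdsWithin] with x hx
      exact (anti self_mem_Ici hx hx).trans_lt ha
    · obtain ⟨u, hu, hua⟩ := hf.exists_lt_infIcc_lt hrt ha
      filter_upwards [self_mem_nhdsWithin, mem_nhdsWithin_of_mem_nhds (Ioi_mem_nhds hu.2)]
        with x hx hux
      exact (anti hu.1 hx (le_of_lt hux)).trans_lt hua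

lemma continuousOn_xst (hf : IsExcursion f) (r : ℝ) : ContinuousOn (xst f r) (Ici r) :=
  (((hf.continuousOn_infIcc r).sub continuousOn_const).sup continuousOn_const).congr
    fun _ h => xst_of_le h

lemma continuousAt_xst (hf : IsExcursion f) (hrt : r ≠ t) : ContinuousAt (xst f r) t := by
  rcases hrt.lt_or_gt with h | h
  · exact (hf.continuousOn_xst r).continuousAt (Ici_mem_nhds h)
  · refine continuousAt_const.congr (EventuallyEq.symm (f := xst f r) (g := fun _ => 0) ?_)
    filter_upwards [Iio_mem_nhds h] with u hu using xst_of_lt hu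

/-- Subtracting `x_t` removes the jump of `f` at `t`. -/
lemma continuousAt_sub_xst (hf : IsExcursion f) (t : ℝ) :
    ContinuousAt (fun u => f u - xst f t u) t := by
  refine continuousAt_iff_continuous_left'_right'.mpr ⟨?_, ?_⟩
  · have hvalue : f t - xst f t t = lm f t := by rw [hf.xst_self, jump, sub_sub_cancel]
    rw [ContinuousWithinAt, hvalue]
    refine (hf.tendsto_nhdsLT_lm t).congr' ?_
    filter_upwards [self_mem_nhdsWithin] with u hu
    rw [xst_of_lt hu, sub_zero]
  · exact ((hf.continuousWithinAt_Ici t).sub (hf.continuousOn_xst t t self_mem_Ici)).mono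
      Ioi_subset_Ici_self

lemma continuousAt_jumpResidual (hf : IsExcursion f) {R : Finset ℝ} (ht : t ∈ R) :
    ContinuousAt (jumpResidual f R) t := by
  have hsplit : jumpResidual f R = fun u => f u - xst f t u - ∑ r ∈ R.erase t, xst f r u := by
    ext u
    rw [jumpResidual, ← Finset.add_sum_erase R _ ht, sub_sub]
  rw [hsplit]
  exact (hf.continuousAt_sub_xst t).sub (tendsto_finsetSum _ fun r hr =>
    hf.continuousAt_xst (Finset.ne_of_mem_erase hr))

/-- Near `t`, `f` is at most `Δ_t` above the function `f - x_t`, which is continuous at `t`. -/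
lemma upperSemicontinuous (hf : IsExcursion f) : UpperSemicontinuous f := by
  intro t a ha
  have hlim := (hf.continuousAt_sub_xst t).add_const (jump f t)
  have hvalue : f t - xst f t t + jump f t < a := by rwa [hf.xst_self, sub_add_cancel]
  filter_upwards [hlim.eventually (gt_mem_nhds hvalue)] with u hu
  linarith [(hf.xst_mem_Icc t u).2]

lemma bddAbove_range (hf : IsExcursion f) : BddAbove (range f) := by
  obtain ⟨M, hM⟩ := (hf.upperSemicontinuous.upperSemicontinuousOn _).bddAbove_of_isCompact
    (isCompact_Icc (a := (0 : ℝ)) (b := 1))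
  have hM0 : 0 ≤ M := (hf.apply_nonneg 0).trans (hM ⟨0, by simp, rfl⟩)
  refine ⟨M, forall_mem_range.mpr fun u => ?_⟩
  by_cases hu : u ∈ Icc (0 : ℝ) 1
  exacts [hM ⟨u, hu, rfl⟩, (hf.zero_outside u hu).trans_le hM0]

/-- The coordinate `x_r` jumps at `r` from `0` to `Δ_r`, which are the same point of the loop:
replacing `0` by `Δ_r` before time `r` makes the coordinate continuous. -/
lemma loopDist_eq_cdel_xst_max (hf : IsExcursion f) (r s t : ℝ) :
    loopDist f r s t = cdel f r (xst f r (max r s)) (xst f r (max r t)) := by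
  have left (u : ℝ) {b : ℝ} (hb : b ∈ Icc 0 (jump f r)) :
      cdel f r (xst f r u) b = cdel f r (xst f r (max r u)) b := by
    rcases lt_or_ge u r with hu | hu
    · rw [max_eq_left hu.le, hf.xst_self, cdel_jump_left hb, xst_of_lt hu]
    · rw [max_eq_right hu]
  rw [loopDist, left s (hf.xst_mem_Icc r t), cdel_comm, left t (hf.xst_mem_Icc r _), cdel_comm]

lemma continuous_loopDist (hf : IsExcursion f) (r : ℝ) :
    Continuous fun p : ℝ × ℝ => loopDist f r p.1 p.2 := by
  have hcoord : Continuous fun u => xst f r (max r u) :=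
    (hf.continuousOn_xst r).comp_continuous (by fun_prop) fun u => le_max_left r u
  simp only [hf.loopDist_eq_cdel_xst_max r]
  exact (continuous_cdel f r).comp (hcoord.fst'.prodMk hcoord.snd')

/-! ### Pure jump growth -/

lemma tendsto_jumpResidual (hf : IsExcursion f) (hP : IsPJG f) (ht : t ∈ Icc (0 : ℝ) 1) :
    Tendsto (fun R => jumpResidual f R t) atTop (𝓝 0) := by
  have hsum : f t = ∑' r, xst f r t := by
    rw [hP t ht, Jop]
    exact tsum_congr fun r => ite_eq_left_iff.mpr fun h => (xst_eq_zero_of_not_pre h).symm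
  have := (hf.summable_xst t).hasSum.const_sub (f t)
  rwa [← hsum, sub_self] at this

lemma dT_eq_zero (hf : IsExcursion f) (hP : IsPJG f) (hs : s ∈ Icc (0 : ℝ) 1)
    (ht : t ∈ Icc (0 : ℝ) 1) : dT f s t = 0 := by
  have hlim := (hf.tendsto_jumpResidual hP hs).add (hf.tendsto_jumpResidual hP ht)
  rw [add_zero] at hlim
  exact (ge_of_tendsto' hlim (hf.dT_le_jumpResidual_add_jumpResidual hs.1 ht.1)).antisymm
    (hf.dT_nonneg hs.1 ht.1)

/-- Dini's argument needs `jumpResidual f R` to be continuous only at `t`, which holds as soon as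
`t ∈ R`. -/
lemma exists_jumpResidual_lt (hf : IsExcursion f) (hP : IsPJG f) {η : ℝ} (hη : 0 < η) :
    ∃ R : Finset ℝ, ∀ t ∈ Icc (0 : ℝ) 1, jumpResidual f R t < η := by
  have hloc (t : ℝ) (ht : t ∈ Icc (0 : ℝ) 1) : ∃ R, ∀ᶠ u in 𝓝 t, jumpResidual f R u < η := by
    obtain ⟨R, hR, htR⟩ := (((hf.tendsto_jumpResidual hP ht).eventually (gt_mem_nhds hη)).and
      (eventually_ge_atTop {t})).exists
    exact ⟨R, (hf.continuousAt_jumpResidual (Finset.singleton_subset_iff.mp htR)).eventually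
      (gt_mem_nhds hR)⟩
  choose! R hR using hloc
  obtain ⟨T, -, hcover⟩ := isCompact_Icc.elim_nhds_subcover
    (fun t => {u | jumpResidual f (R t) u < η}) hR
  refine ⟨T.biUnion R, fun u hu => ?_⟩
  obtain ⟨t, htT, hut⟩ := mem_iUnion₂.mp (hcover hu)
  exact (jumpResidual_antitone f u (Finset.subset_biUnion_of_mem R htT)).trans_lt hut

lemma continuousOn_dL (hf : IsExcursion f) (hP : IsPJG f) :
    ContinuousOn (fun p : ℝ × ℝ => dL f p.1 p.2) (Icc (0 : ℝ) 1 ×ˢ Icc (0 : ℝ) 1) := by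
  refine continuousOn_of_uniform_approx_of_continuousOn fun U hU => ?_
  obtain ⟨ε, hε, hεU⟩ := Metric.mem_uniformity_dist.mp hU
  obtain ⟨R, hR⟩ := hf.exists_jumpResidual_lt hP (half_pos hε)
  refine ⟨fun p => ∑ r ∈ R, loopDist f r p.1 p.2,
    (continuous_finsetSum R fun r _ => hf.continuous_loopDist r).continuousOn,
    fun p hp => hεU ?_⟩
  rw [Real.dist_eq]
  linarith [hf.abs_dL_sub_sum_loopDist_le hp.1.1 hp.2.1 R, hR p.1 hp.1, hR p.2 hp.2]

end IsExcursion

/-! ### Time changes -/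

section TimeChange

variable {f g : ℝ → ℝ} {e : ℝ ≃o ℝ} {c : ℝ}

lemma abs_lm_sub_lm_le (hf : IsExcursion f) (hg : IsExcursion g)
    (h : ∀ x, |g x - f (e x)| ≤ c) (t : ℝ) : |lm g t - lm f (e t)| ≤ c := by
  have he : Tendsto e (𝓝[<] t) (𝓝[<] (e t)) :=
    e.continuous.continuousWithinAt.tendsto_nhdsWithin fun _ hx => e.strictMono hx
  exact le_of_tendsto' ((hg.tendsto_nhdsLT_lm t).sub ((hf.tendsto_nhdsLT_lm (e t)).comp he)).abs h

lemma abs_jump_sub_jump_le (hf : IsExcursion f) (hg : IsExcursion g)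
    (h : ∀ x, |g x - f (e x)| ≤ c) (t : ℝ) : |jump g t - jump f (e t)| ≤ 2 * c := by
  rw [jump, jump, sub_sub_sub_comm, two_mul]
  exact (abs_sub _ _).trans (add_le_add (h t) (abs_lm_sub_lm_le hf hg h t))

lemma abs_xst_sub_xst_le (hf : IsExcursion f) (hg : IsExcursion g)
    (h : ∀ x, |g x - f (e x)| ≤ c) (r t : ℝ) : |xst g r t - xst f (e r) (e t)| ≤ 2 * c := by
  rcases lt_or_ge t r with htr | hrt
  · rw [xst_of_lt htr, xst_of_lt (e.strictMono htr), sub_zero, abs_zero]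
    linarith [(abs_nonneg _).trans (h r)]
  · rw [xst_of_le hrt, xst_of_le (e.monotone hrt)]
    refine (abs_max_sub_max_le_abs _ _ _).trans ?_
    rw [sub_sub_sub_comm, two_mul]
    exact (abs_sub _ _).trans (add_le_add
      (abs_infIcc_sub_infIcc_le hf.bddBelow_range hg.bddBelow_range h hrt)
      (abs_lm_sub_lm_le hf hg h r))

lemma abs_loopDist_sub_loopDist_le (hf : IsExcursion f) (hg : IsExcursion g)
    (h : ∀ x, |g x - f (e x)| ≤ c) (r s t : ℝ) :
    |loopDist g r s t - loopDist f (e r) (e s) (e t)| ≤ 6 * c := by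
  refine (abs_cdel_sub_cdel_le f g _ _ _ _ _ _).trans ?_
  linarith [abs_jump_sub_jump_le hf hg h r, abs_xst_sub_xst_le hf hg h r s,
    abs_xst_sub_xst_le hf hg h r t]

lemma jumpResidual_map_symm_le (hf : IsExcursion f) (hg : IsExcursion g)
    (h : ∀ x, |g x - f (e x)| ≤ c) (R : Finset ℝ) (t : ℝ) :
    jumpResidual g (R.map e.symm.toEmbedding) t
      ≤ jumpResidual f R (e t) + (1 + 2 * R.card) * c := by
  have hsum : ∑ r ∈ R, (xst f r (e t) - xst g (e.symm r) t) ≤ R.card • (2 * c) :=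
    Finset.sum_le_card_nsmul _ _ _ fun r _ => by
      have := (abs_le.mp (abs_xst_sub_xst_le hf hg h (e.symm r) t)).1
      rw [e.apply_symm_apply] at this
      linarith
  rw [Finset.sum_sub_distrib, nsmul_eq_mul] at hsum
  rw [jumpResidual, jumpResidual, Finset.sum_map]
  change g t - ∑ r ∈ R, xst g (e.symm r) t ≤ _
  linarith [(abs_le.mp (h t)).2]

lemma abs_sum_loopDist_sub_le (hf : IsExcursion f) (hg : IsExcursion g)
    (h : ∀ x, |g x - f (e x)| ≤ c) (R : Finset ℝ) (s t : ℝ) :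
    |∑ r ∈ R.map e.symm.toEmbedding, loopDist g r s t - ∑ r ∈ R, loopDist f r (e s) (e t)|
      ≤ 6 * R.card * c := by
  rw [Finset.sum_map, ← Finset.sum_sub_distrib]
  calc _ ≤ ∑ r ∈ R, |loopDist g (e.symm r) s t - loopDist f r (e s) (e t)| :=
        Finset.abs_sum_le_sum_abs _ _
    _ ≤ R.card • (6 * c) := Finset.sum_le_card_nsmul _ _ _ fun r _ => by
        simpa only [e.apply_symm_apply] using abs_loopDist_sub_loopDist_le hf hg h (e.symm r) s t
    _ = 6 * R.card * c := by rw [nsmul_eq_mul]; ring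

lemma dT_le_of_timeChange (hf : IsExcursion f) (hg : IsExcursion g)
    (h : ∀ x, |g x - f (e x)| ≤ c) {s t : ℝ} (hs : 0 ≤ s) (ht : 0 ≤ t) (R : Finset ℝ) :
    dT g s t ≤ jumpResidual f R (e s) + jumpResidual f R (e t) + (2 + 4 * R.card) * c := by
  linarith [hg.dT_le_jumpResidual_add_jumpResidual hs ht (R.map e.symm.toEmbedding),
    jumpResidual_map_symm_le hf hg h R s, jumpResidual_map_symm_le hf hg h R t]

lemma abs_dL_sub_dL_le_of_timeChange (hf : IsExcursion f) (hg : IsExcursion g)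
    (h : ∀ x, |g x - f (e x)| ≤ c) {s t : ℝ} (hs : 0 ≤ s) (ht : 0 ≤ t) (hes : 0 ≤ e s)
    (het : 0 ≤ e t) (R : Finset ℝ) :
    |dL g s t - dL f (e s) (e t)|
      ≤ 2 * (jumpResidual f R (e s) + jumpResidual f R (e t)) + (2 + 10 * R.card) * c := by
  have hdg := abs_le.mp (hg.abs_dL_sub_sum_loopDist_le hs ht (R.map e.symm.toEmbedding))
  have hdf := abs_le.mp (hf.abs_dL_sub_sum_loopDist_le hes het R)
  have hsum := abs_le.mp (abs_sum_loopDist_sub_le hf hg h R s t)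
  have hress := jumpResidual_map_symm_le hf hg h R s
  have hrest := jumpResidual_map_symm_le hf hg h R t
  exact abs_le.mpr ⟨by linarith [hdg.1, hdf.2, hsum.1], by linarith [hdg.2, hdf.1, hsum.2]⟩

end TimeChange

/-- The time change `e` witnesses that `g` and `f` are at Skorokhod distance at most `c`. It is a
bijection of the whole line, as the functions are extended by `0` outside `[0,1]`. -/
structure IsTimeChange (e : ℝ ≃o ℝ) (c : ℝ) (g f : ℝ → ℝ) : Prop where
  mapsTo : MapsTo e (Icc 0 1) (Icc 0 1)
  abs_sub_le : ∀ x ∈ Icc (0 : ℝ) 1, |e x - x| ≤ c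
  abs_apply_sub_le : ∀ x, |g x - f (e x)| ≤ c

lemma IncBij.exists_orderIso {l : ℝ → ℝ} (hl : IncBij l) :
    ∃ e : ℝ ≃o ℝ, EqOn e l (Icc 0 1) ∧ EqOn e id (Icc 0 1)ᶜ := by
  have hin : EqOn ((Icc 0 1).piecewise l id) l (Icc 0 1) := piecewise_eqOn _ _ _
  have hout : EqOn ((Icc 0 1).piecewise l id) id (Icc 0 1)ᶜ := piecewise_eqOn_compl _ _ _
  have hmono : StrictMono ((Icc (0 : ℝ) 1).piecewise l id) := by
    intro x y hxy
    by_cases hx : x ∈ Icc (0 : ℝ) 1 <;> by_cases hy : y ∈ Icc (0 : ℝ) 1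
    · rw [hin hx, hin hy]
      exact hl.1 hx hy hxy
    · rw [hin hx, hout hy]
      have h1 : 1 < y := not_le.mp fun h => hy ⟨hx.1.trans hxy.le, h⟩
      exact (hl.2.mapsTo hx).2.trans_lt h1
    · rw [hout hx, hin hy]
      have h0 : x < 0 := not_le.mp fun h => hx ⟨h, hxy.le.trans hy.2⟩
      exact h0.trans_le (hl.2.mapsTo hy).1
    · rwa [hout hx, hout hy]
  have hsurj : Function.Surjective ((Icc (0 : ℝ) 1).piecewise l id) := by
    intro y
    by_cases hy : y ∈ Icc (0 : ℝ) 1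
    · obtain ⟨x, hx, rfl⟩ := hl.2.surjOn hy
      exact ⟨x, hin hx⟩
    · exact ⟨y, hout hy⟩
  exact ⟨hmono.orderIsoOfSurjective _ hsurj, hin, hout⟩

/-- Boundedness of excursions makes the set defining `skor` nonempty, so that its infimum is not
the junk value `0`. -/
lemma exists_incBij_of_skor_lt {f g : ℝ → ℝ} (hf : IsExcursion f) (hg : IsExcursion g) {c : ℝ}
    (h : skor g f < c) : 0 ≤ c ∧ ∃ l : ℝ → ℝ, IncBij l ∧
      ∀ x ∈ Icc (0 : ℝ) 1, |l x - x| ≤ c ∧ |g x - f (l x)| ≤ c := by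
  obtain ⟨M, hM⟩ := hf.bddAbove_range
  obtain ⟨N, hN⟩ := hg.bddAbove_range
  rw [mem_upperBounds, forall_mem_range] at hM hN
  have hid : ∀ x ∈ Icc (0 : ℝ) 1, |id x - x| ≤ M + N ∧ |g x - f (id x)| ≤ M + N := by
    intro x _
    have hfx := hf.apply_nonneg x
    have hgx := hg.apply_nonneg x
    rw [id, sub_self, abs_zero]
    have hMx := hM x
    have hNx := hN x
    exact ⟨by linarith, abs_le.mpr ⟨by linarith, by linarith⟩⟩
  obtain ⟨c', ⟨hc', l, hl, hlc⟩, hlt⟩ := exists_lt_of_csInf_lt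
    (by exact ⟨M + N, (abs_nonneg _).trans (hid 0 (by simp)).1, id,
      ⟨strictMono_id.strictMonoOn _, bijOn_id _⟩, hid⟩) h
  exact ⟨hc'.trans hlt.le, l, hl, fun x hx =>
    ⟨(hlc x hx).1.trans hlt.le, (hlc x hx).2.trans hlt.le⟩⟩

lemma exists_isTimeChange_of_skor_lt {f g : ℝ → ℝ} (hf : IsExcursion f) (hg : IsExcursion g)
    {c : ℝ} (h : skor g f < c) : ∃ e, IsTimeChange e c g f := by
  obtain ⟨hc, l, hl, hlc⟩ := exists_incBij_of_skor_lt hf hg h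
  obtain ⟨e, hin, hout⟩ := hl.exists_orderIso
  refine ⟨e, fun x hx => ?_, fun x hx => ?_, fun x => ?_⟩
  · rw [hin hx]
    exact hl.2.mapsTo hx
  · rw [hin hx]
    exact (hlc x hx).1
  · by_cases hx : x ∈ Icc (0 : ℝ) 1
    · rw [hin hx]
      exact (hlc x hx).2
    · rwa [hout hx, id, hf.zero_outside x hx, hg.zero_outside x hx, sub_self, abs_zero]

/-! ### Convergence -/

namespace IsExcursion

variable {f : ℝ → ℝ} {ε : ℝ}

lemma eventually_forall_isTimeChange (hf : IsExcursion f) (hP : IsPJG f) (hε : 0 < ε) :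
    ∀ᶠ c in 𝓝[>] (0 : ℝ), ∀ g e, IsExcursion g → IsTimeChange e c g f →
      ∀ s ∈ Icc (0 : ℝ) 1, ∀ t ∈ Icc (0 : ℝ) 1,
        dT g s t < ε ∧ |dL g s t - dL f (e s) (e t)| < ε := by
  obtain ⟨R, hR⟩ := hf.exists_jumpResidual_lt hP (η := ε / 5) (by positivity)
  have hsmall : Tendsto (fun c : ℝ => (2 + 10 * R.card) * c) (𝓝[>] 0) (𝓝 0) :=
    (Continuous.tendsto' (by fun_prop) 0 0 (mul_zero _)).mono_left nhdsWithin_le_nhds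
  filter_upwards [hsmall.eventually (gt_mem_nhds (show 0 < ε / 5 by positivity)),
    self_mem_nhdsWithin] with c hc (hc0 : 0 < c) g e hg he s hs t ht
  have hRs := hR (e s) (he.mapsTo hs)
  have hRt := hR (e t) (he.mapsTo ht)
  constructor
  · have hmono : (2 + 4 * R.card) * c ≤ (2 + 10 * R.card) * c := by gcongr; norm_num
    linarith [dT_le_of_timeChange hf hg he.abs_apply_sub_le hs.1 ht.1 R]
  · linarith [abs_dL_sub_dL_le_of_timeChange hf hg he.abs_apply_sub_le hs.1 ht.1
      (he.mapsTo hs).1 (he.mapsTo ht).1 R]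

lemma eventually_forall_abs_dL_sub_dL_lt (hf : IsExcursion f) (hP : IsPJG f) (hε : 0 < ε) :
    ∀ᶠ c in 𝓝[>] (0 : ℝ), ∀ g e, IsTimeChange e c g f →
      ∀ s ∈ Icc (0 : ℝ) 1, ∀ t ∈ Icc (0 : ℝ) 1, |dL f (e s) (e t) - dL f s t| < ε := by
  obtain ⟨δ, hδ, hunif⟩ := Metric.uniformContinuousOn_iff.mp
    ((isCompact_Icc.prod isCompact_Icc).uniformContinuousOn_of_continuous
      (hf.continuousOn_dL hP)) ε hε
  filter_upwards [mem_nhdsWithin_of_mem_nhds (Iio_mem_nhds hδ)] with c hc g e he s hs t ht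
  refine hunif (e s, e t) ⟨he.mapsTo hs, he.mapsTo ht⟩ (s, t) ⟨hs, ht⟩ (max_lt ?_ ?_)
  exacts [(he.abs_sub_le s hs).trans_lt hc, (he.abs_sub_le t ht).trans_lt hc]

variable {ι : Type*} {l : Filter ι} {F : ι → ℝ → ℝ}

lemma eventually_dist_dT_lt_and_dist_dL_lt (hf : IsExcursion f) (hP : IsPJG f)
    (hF : ∀ i, IsExcursion (F i)) (hconv : Tendsto (fun i => skor (F i) f) l (𝓝 0))
    (hε : 0 < ε) :
    ∀ᶠ i in l, ∀ p ∈ Icc (0 : ℝ) 1 ×ˢ Icc (0 : ℝ) 1,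
      dist 0 (dT (F i) p.1 p.2) < ε ∧ dist (dL f p.1 p.2) (dL (F i) p.1 p.2) < ε := by
  obtain ⟨c, hcF, hcf, hc⟩ := ((hf.eventually_forall_isTimeChange hP (half_pos hε)).and
    ((hf.eventually_forall_abs_dL_sub_dL_lt hP (half_pos hε)).and self_mem_nhdsWithin)).exists
  filter_upwards [hconv.eventually (gt_mem_nhds hc)] with i hi p ⟨hs, ht⟩
  obtain ⟨e, he⟩ := exists_isTimeChange_of_skor_lt hf (hF i) hi
  obtain ⟨hT, hL⟩ := hcF (F i) e (hF i) he p.1 hs p.2 ht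
  have hL' := hcf (F i) e he p.1 hs p.2 ht
  rw [dist_comm, Real.dist_eq, sub_zero, abs_of_nonneg ((hF i).dT_nonneg hs.1 ht.1),
    dist_comm, Real.dist_eq]
  have triangle := abs_sub_le (dL (F i) p.1 p.2) (dL f (e p.1) (e p.2)) (dL f p.1 p.2)
  exact ⟨by linarith, by linarith⟩

theorem tendstoUniformlyOn_dT (hf : IsExcursion f) (hP : IsPJG f)
    (hF : ∀ i, IsExcursion (F i)) (hconv : Tendsto (fun i => skor (F i) f) l (𝓝 0)) :
    TendstoUniformlyOn (fun i (p : ℝ × ℝ) => dT (F i) p.1 p.2) (fun _ => 0) l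
      (Icc (0 : ℝ) 1 ×ˢ Icc (0 : ℝ) 1) :=
  Metric.tendstoUniformlyOn_iff.mpr fun _ hε =>
    (hf.eventually_dist_dT_lt_and_dist_dL_lt hP hF hconv hε).mono fun _ h p hp => (h p hp).1

theorem tendstoUniformlyOn_dL (hf : IsExcursion f) (hP : IsPJG f)
    (hF : ∀ i, IsExcursion (F i)) (hconv : Tendsto (fun i => skor (F i) f) l (𝓝 0)) :
    TendstoUniformlyOn (fun i (p : ℝ × ℝ) => dL (F i) p.1 p.2) (fun p => dL f p.1 p.2) l
      (Icc (0 : ℝ) 1 ×ˢ Icc (0 : ℝ) 1) :=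
  Metric.tendstoUniformlyOn_iff.mpr fun _ hε =>
    (hf.eventually_dist_dT_lt_and_dist_dL_lt hP hF hconv hε).mono fun _ h p hp => (h p hp).2

lemma dV_eq_two_mul_dL (hf : IsExcursion f) (hP : IsPJG f) {s t : ℝ} (hs : s ∈ Icc (0 : ℝ) 1)
    (ht : t ∈ Icc (0 : ℝ) 1) : dV f s t = 2 * dL f s t := by
  rw [dV, hf.dT_eq_zero hP hs ht, zero_add]

theorem tendstoUniformlyOn_dV (hf : IsExcursion f) (hP : IsPJG f)
    (hF : ∀ i, IsExcursion (F i)) (hconv : Tendsto (fun i => skor (F i) f) l (𝓝 0)) :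
    TendstoUniformlyOn (fun i (p : ℝ × ℝ) => dV (F i) p.1 p.2) (fun p => dV f p.1 p.2) l
      (Icc (0 : ℝ) 1 ×ˢ Icc (0 : ℝ) 1) := by
  have hL := hf.tendstoUniformlyOn_dL hP hF hconv
  refine (((hf.tendstoUniformlyOn_dT hP hF hconv).add (hL.add hL)).congr
    (Eventually.of_forall fun i p _ => ?_)).congr_right fun p hp => ?_
  · simp only [Pi.add_apply, dV, two_mul]
  · simp only [Pi.add_apply, hf.dV_eq_two_mul_dL hP hp.1 hp.2, two_mul, zero_add]

end IsExcursion

theorem statement17 (f : ℝ → ℝ) (hf : IsExcursion f) (F : ℕ → ℝ → ℝ)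
    (hF : ∀ n, IsExcursion (F n))
    (hconv : Tendsto (fun n => skor (F n) f) atTop (𝓝 0))
    (hPJG : IsPJG f) :
    TendstoUniformlyOn (fun n (p : ℝ × ℝ) => dL (F n) p.1 p.2)
        (fun p => dL f p.1 p.2) atTop (Icc (0:ℝ) 1 ×ˢ Icc (0:ℝ) 1) ∧
    TendstoUniformlyOn (fun n (p : ℝ × ℝ) => dT (F n) p.1 p.2)
        (fun _ => (0:ℝ)) atTop (Icc (0:ℝ) 1 ×ˢ Icc (0:ℝ) 1) ∧
    TendstoUniformlyOn (fun n (p : ℝ × ℝ) => dV (F n) p.1 p.2)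
        (fun p => dV f p.1 p.2) atTop (Icc (0:ℝ) 1 ×ˢ Icc (0:ℝ) 1) ∧
    (∀ s ∈ Icc (0:ℝ) 1, ∀ t ∈ Icc (0:ℝ) 1, dV f s t = 2 * dL f s t) :=
  ⟨hf.tendstoUniformlyOn_dL hPJG hF hconv, hf.tendstoUniformlyOn_dT hPJG hF hconv,
    hf.tendstoUniformlyOn_dV hPJG hF hconv, fun _ hs _ ht => hf.dV_eq_two_mul_dL hPJG hs ht⟩
end
end

section
/- Let (X_n, d_n), n ≥ 0, be compact vernation trees (each nonempty), and let (X,d) be a nonempty compact metric space. If X_n → X for the Gromov–Hausdorff topology (i.e. the Gromov–Hausdorff distance between X_n and X tends to 0), then X is a compact vernation tree. -/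
open Set Filter Topology

noncomputable section

/-- A geodesic metric space: any two points are joined by a geodesic. -/
def IsGeodesicSpace (X : Type*) [MetricSpace X] : Prop :=
  ∀ x y : X, ∃ γ : ℝ → X, γ 0 = x ∧ γ 1 = y ∧
    ∀ s ∈ Icc (0:ℝ) 1, ∀ t ∈ Icc (0:ℝ) 1, dist (γ s) (γ t) = |s - t| * dist x y

/-- A loop on `X` based at `x`: a continuous map on `[0,1]`, injective on `[0,1)`,
with `γ 0 = γ 1 = x`. -/
def IsLoop {X : Type*} [MetricSpace X] (γ : ℝ → X) (x : X) : Prop :=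
  ContinuousOn γ (Icc 0 1) ∧ InjOn γ (Ico 0 1) ∧ γ 0 = x ∧ γ 1 = x

/-- A vernation tree: a geodesic space in which two loops based at the same point
have equal images or images meeting only at the base point. -/
def IsVernationTree (X : Type*) [MetricSpace X] : Prop :=
  IsGeodesicSpace X ∧
    ∀ (x : X) (γ₁ γ₂ : ℝ → X), IsLoop γ₁ x → IsLoop γ₂ x →
      γ₁ '' Icc 0 1 = γ₂ '' Icc 0 1 ∨ γ₁ '' Icc 0 1 ∩ γ₂ '' Icc 0 1 = {x}

/-!
A space is a vernation tree exactly when it is geodesic and contains no theta curve, that is, no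
three arcs with common endpoints which are otherwise disjoint.

In a vernation tree, any two points `a` and `b` are separated by at most two points of each sphere
around `a` of radius `r ≤ dist a b`: take a point `p` at distance `r` on a geodesic from `a` to
`b`; an arc from `a` to `b` avoiding `p` closes up a circle with the geodesic, and a point `q` of
this circle at distance `r` on the other side works, for otherwise there would be a theta curve.
With `r = dist a b / 2`, the separating points stay away from `a` and `b` and so converge, along an
ultrafilter, to two points of the limit space other than `a` and `b`. These still meet every closed
connected set through `a` and `b`, since such a set can be shadowed by chains of short geodesics in
the approximating trees. In a theta curve with endpoints `a` and `b`, however, two points cannot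
meet all three arcs.
-/

section Arc

variable {X : Type*} [TopologicalSpace X] {A B C F G : Set X} {x y z c d : X}

/-- `A` is an arc from `x` to `y`: the image of a compact interval under an injective path from
`x` to `y`. The interval is arbitrary, so that a subarc needs no reparametrization. -/
def IsArc (A : Set X) (x y : X) : Prop :=
  ∃ (f : ℝ → X) (s t : ℝ), s < t ∧ ContinuousOn f (Icc s t) ∧ InjOn f (Icc s t) ∧
    f s = x ∧ f t = y ∧ f '' Icc s t = A

lemma isArc_image_Icc {f : ℝ → X} {s t : ℝ} (hst : s < t) (hf : ContinuousOn f (Icc s t))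
    (hi : InjOn f (Icc s t)) : IsArc (f '' Icc s t) (f s) (f t) :=
  ⟨f, s, t, hst, hf, hi, rfl, rfl, rfl⟩

namespace IsArc

lemma exists_param (h : IsArc A x y) {s t : ℝ} (hst : s < t) :
    ∃ f : ℝ → X, ContinuousOn f (Icc s t) ∧ InjOn f (Icc s t) ∧ f s = x ∧ f t = y ∧
      f '' Icc s t = A := by
  obtain ⟨f, s', t', hst', hf, hi, rfl, rfl, rfl⟩ := h
  set k := (t' - s') / (t - s)
  have hk0 : 0 < k := div_pos (sub_pos.2 hst') (sub_pos.2 hst)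
  have hs : k * s + (s' - k * s) = s' := by ring
  have ht : k * t + (s' - k * s) = t' := by
    have : k * (t - s) = t' - s' := div_mul_cancel₀ _ (sub_pos.2 hst).ne'
    linear_combination this
  have himage : (fun u => k * u + (s' - k * s)) '' Icc s t = Icc s' t' := by
    rw [image_affine_Icc' hk0, hs, ht]
  have hmaps : MapsTo (fun u => k * u + (s' - k * s)) (Icc s t) (Icc s' t') :=
    mapsTo_iff_image_subset.2 himage.subset
  refine ⟨fun u => f (k * u + (s' - k * s)), hf.comp (by fun_prop) hmaps,
    fun u hu v hv huv => ?_, congrArg f hs, congrArg f ht, by rw [← himage, image_image]⟩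
  exact mul_left_cancel₀ hk0.ne' (add_right_cancel (hi (hmaps hu) (hmaps hv) huv))

lemma symm (h : IsArc A x y) : IsArc A y x := by
  obtain ⟨f, s, t, hst, hf, hi, rfl, rfl, rfl⟩ := h
  have hmaps : MapsTo (fun u : ℝ => -u) (Icc (-t) (-s)) (Icc s t) :=
    fun u hu => ⟨le_neg.2 hu.2, neg_le.2 hu.1⟩
  refine ⟨fun u => f (-u), -t, -s, neg_lt_neg hst, hf.comp (by fun_prop) hmaps,
    hi.comp neg_injective.injOn hmaps, congrArg f (neg_neg t),
    congrArg f (neg_neg s), ?_⟩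
  rw [← image_image f (fun u : ℝ => -u), image_neg_eq_neg, neg_Icc, neg_neg, neg_neg]

lemma left_mem (h : IsArc A x y) : x ∈ A := by
  obtain ⟨f, s, t, hst, -, -, rfl, -, rfl⟩ := h
  exact mem_image_of_mem f (left_mem_Icc.2 hst.le)

lemma right_mem (h : IsArc A x y) : y ∈ A :=
  h.symm.left_mem

lemma exists_mem_ne_ne (h : IsArc A x y) : ∃ w ∈ A, w ≠ x ∧ w ≠ y := by
  obtain ⟨f, s, t, hst, -, hi, rfl, rfl, rfl⟩ := h
  obtain ⟨u, hsu, hut⟩ := exists_between hst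
  have hu : u ∈ Icc s t := ⟨hsu.le, hut.le⟩
  exact ⟨f u, mem_image_of_mem f hu, hi.ne hu (left_mem_Icc.2 hst.le) hsu.ne',
    hi.ne hu (right_mem_Icc.2 hst.le) hut.ne⟩

lemma ne (h : IsArc A x y) : x ≠ y := by
  obtain ⟨f, s, t, hst, -, hi, rfl, rfl, -⟩ := h
  exact hi.ne (left_mem_Icc.2 hst.le) (right_mem_Icc.2 hst.le) hst.ne

lemma isPreconnected (h : IsArc A x y) : IsPreconnected A := by
  obtain ⟨f, s, t, -, hf, -, -, -, rfl⟩ := h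
  exact isPreconnected_Icc.image f hf

lemma isClosed [T2Space X] (h : IsArc A x y) : IsClosed A := by
  obtain ⟨f, s, t, -, hf, -, -, -, rfl⟩ := h
  exact (isCompact_Icc.image_of_continuousOn hf).isClosed

lemma exists_split (h : IsArc A x y) (hc : c ∈ A) (hcx : c ≠ x) (hcy : c ≠ y) :
    ∃ A₁ A₂, IsArc A₁ x c ∧ IsArc A₂ c y ∧ A₁ ∪ A₂ = A ∧ A₁ ∩ A₂ = {c} := by
  obtain ⟨f, s, t, -, hf, hi, rfl, rfl, rfl⟩ := h
  obtain ⟨u, hu, rfl⟩ := hc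
  have hsu : s < u := hu.1.lt_of_ne fun h => hcx (h ▸ rfl)
  have hut : u < t := hu.2.lt_of_ne fun h => hcy (h ▸ rfl)
  have hsub₁ : Icc s u ⊆ Icc s t := Icc_subset_Icc_right hu.2
  have hsub₂ : Icc u t ⊆ Icc s t := Icc_subset_Icc_left hu.1
  refine ⟨f '' Icc s u, f '' Icc u t, isArc_image_Icc hsu (hf.mono hsub₁) (hi.mono hsub₁),
    isArc_image_Icc hut (hf.mono hsub₂) (hi.mono hsub₂), ?_, ?_⟩
  · rw [← image_union, Icc_union_Icc_eq_Icc hu.1 hu.2]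
  · rw [← hi.image_inter hsub₁ hsub₂, Icc_inter_Icc_eq_singleton hu.1 hu.2, image_singleton]

lemma exists_tail (h : IsArc A x y) (hc : c ∈ A) (hcy : c ≠ y) : ∃ A' ⊆ A, IsArc A' c y := by
  rcases eq_or_ne c x with rfl | hcx
  · exact ⟨A, subset_rfl, h⟩
  · obtain ⟨A₁, A₂, -, hA₂, rfl, -⟩ := h.exists_split hc hcx hcy
    exact ⟨A₂, subset_union_right, hA₂⟩

lemma exists_param_trans (hA : IsArc A x y) (hB : IsArc B y z) :
    ∃ h : ℝ → X, ContinuousOn h (Icc 0 1) ∧ h 0 = x ∧ h (1 / 2) = y ∧ h 1 = z ∧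
      InjOn h (Icc 0 (1 / 2)) ∧ InjOn h (Icc (1 / 2) 1) ∧
      h '' Icc 0 (1 / 2) = A ∧ h '' Icc (1 / 2) 1 = B := by
  obtain ⟨f, hf, hfi, rfl, hfy, rfl⟩ := hA.exists_param (half_pos (zero_lt_one (α := ℝ)))
  obtain ⟨g, hg, hgi, hgy, rfl, rfl⟩ := hB.exists_param (half_lt_self (zero_lt_one (α := ℝ)))
  set h : ℝ → X := fun t => if t ≤ 1 / 2 then f t else g t
  have hhf : EqOn h f (Icc 0 (1 / 2)) := fun t ht => if_pos ht.2
  have hhg : EqOn h g (Icc (1 / 2) 1) := by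
    intro t ht
    rcases ht.1.eq_or_lt with rfl | hlt
    · exact (if_pos le_rfl).trans (hfy.trans hgy.symm)
    · exact if_neg hlt.not_ge
  refine ⟨h, ?_, hhf (by simp), (hhf (by simp)).trans hfy, hhg (by norm_num),
    hfi.congr hhf.symm, hgi.congr hhg.symm, hhf.image_eq, hhg.image_eq⟩
  rw [← Icc_union_Icc_eq_Icc (half_pos (zero_lt_one (α := ℝ))).le (half_lt_self zero_lt_one).le]
  exact (hf.congr hhf).union_of_isClosed (hg.congr hhg) isClosed_Icc isClosed_Icc

lemma union (hA : IsArc A x y) (hB : IsArc B y z) (hAB : A ∩ B ⊆ {y}) :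
    IsArc (A ∪ B) x z := by
  obtain ⟨h, hh, rfl, rfl, rfl, hi₁, hi₂, rfl, rfl⟩ := hA.exists_param_trans hB
  have hIcc : Icc (0 : ℝ) (1 / 2) ∪ Icc (1 / 2) 1 = Icc 0 1 :=
    Icc_union_Icc_eq_Icc (by norm_num) (by norm_num)
  have hIoc : Icc (0 : ℝ) (1 / 2) ∪ Ioc (1 / 2) 1 = Icc 0 1 :=
    Icc_union_Ioc_eq_Icc (by norm_num) (by norm_num)
  have hdisj : Disjoint (Icc (0 : ℝ) (1 / 2)) (Ioc (1 / 2) 1) :=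
    disjoint_left.2 fun t ht ht' => ht.2.not_gt ht'.1
  rw [← image_union, hIcc]
  refine isArc_image_Icc zero_lt_one hh ?_
  rw [← hIoc, injOn_union hdisj]
  refine ⟨hi₁, hi₂.mono Ioc_subset_Icc_self, fun s hs t ht hst => ht.1.ne' ?_⟩
  have ht' : t ∈ Icc (1 / 2) 1 := Ioc_subset_Icc_self ht
  exact hi₂ ht' (by norm_num) (hAB ⟨hst ▸ mem_image_of_mem h hs, mem_image_of_mem h ht'⟩)

lemma exists_crossing (h : IsArc A x y) (hF : IsClosed F) (hG : IsClosed G) (hx : x ∈ F)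
    (hy : y ∈ G) (hFG : Disjoint A (F ∩ G)) :
    ∃ c ∈ F, ∃ d ∈ G, ∃ A' ⊆ A, IsArc A' c d ∧ A' ∩ F ⊆ {c} ∧ A' ∩ G ⊆ {d} := by
  obtain ⟨f, s₀, t₀, hst₀, hf, hi, rfl, rfl, rfl⟩ := h
  obtain ⟨t, ⟨ht, htG⟩, hmin⟩ : ∃ t, IsLeast (Icc s₀ t₀ ∩ f ⁻¹' G) t :=
    (isCompact_Icc.of_isClosed_subset (hf.preimage_isClosed_of_isClosed isClosed_Icc hG)
      inter_subset_left).exists_isLeast ⟨t₀, right_mem_Icc.2 hst₀.le, hy⟩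
  have hsub : Icc s₀ t ⊆ Icc s₀ t₀ := Icc_subset_Icc_right ht.2
  obtain ⟨s, ⟨hs, hsF⟩, hmax⟩ : ∃ s, IsGreatest (Icc s₀ t ∩ f ⁻¹' F) s :=
    (isCompact_Icc.of_isClosed_subset
      ((hf.mono hsub).preimage_isClosed_of_isClosed isClosed_Icc hF)
      inter_subset_left).exists_isGreatest ⟨s₀, left_mem_Icc.2 ht.1, hx⟩
  have hst : s < t := hs.2.lt_of_ne fun h =>
    disjoint_left.1 hFG (mem_image_of_mem f ht) ⟨h ▸ hsF, htG⟩
  have hsub' : Icc s t ⊆ Icc s₀ t₀ := Icc_subset_Icc hs.1 ht.2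
  refine ⟨f s, hsF, f t, htG, f '' Icc s t, image_mono hsub',
    isArc_image_Icc hst (hf.mono hsub') (hi.mono hsub'), ?_, ?_⟩
  · rintro _ ⟨⟨u, hu, rfl⟩, huF⟩
    exact congrArg f (le_antisymm (hmax ⟨⟨hs.1.trans hu.1, hu.2⟩, huF⟩) hu.1)
  · rintro _ ⟨⟨u, hu, rfl⟩, huG⟩
    exact congrArg f (le_antisymm hu.2 (hmin ⟨hsub' hu, huG⟩))

lemma exists_first_hit [T1Space X] (h : IsArc A x y) (hG : IsClosed G) (hx : x ∉ G)
    (hy : y ∈ G) : ∃ d ∈ G, ∃ A' ⊆ A, IsArc A' x d ∧ A' ∩ G ⊆ {d} := by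
  have hdisj : Disjoint A ({x} ∩ G) := by
    rw [singleton_inter_eq_empty.2 hx]
    exact disjoint_bot_right
  obtain ⟨c, rfl, d, hd, A', hA', hcd, -, hA'G⟩ :=
    h.exists_crossing isClosed_singleton hG (mem_singleton x) hy hdisj
  exact ⟨d, hd, A', hA', hcd, hA'G⟩

lemma exists_chord [T1Space X] (h : IsArc A x y) (hG : IsClosed G) (hx : x ∈ G) (hy : y ∈ G)
    (hz : z ∈ A) (hzG : z ∉ G) :
    ∃ c ∈ G, ∃ d ∈ G, ∃ A' ⊆ A, IsArc A' c d ∧ A' ∩ G ⊆ {c, d} := by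
  obtain ⟨A₁, A₂, hA₁, hA₂, rfl, hA₁₂⟩ :=
    h.exists_split hz (ne_of_mem_of_not_mem hx hzG).symm (ne_of_mem_of_not_mem hy hzG).symm
  obtain ⟨c, hc, D, hD, hzc, hDG⟩ := hA₁.symm.exists_first_hit hG hzG hx
  obtain ⟨d, hd, E, hE, hzd, hEG⟩ := hA₂.exists_first_hit hG hzG hy
  refine ⟨c, hc, d, hd, D ∪ E, union_subset_union hD hE,
    hzc.symm.union hzd ((inter_subset_inter hD hE).trans hA₁₂.subset), ?_⟩
  rw [union_inter_distrib_right]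
  exact union_subset_union hDG hEG

lemma exists_trans [T2Space X] (hA : IsArc A x y) (hB : IsArc B y z) (hxz : x ≠ z) :
    ∃ C ⊆ A ∪ B, IsArc C x z := by
  by_cases hx : x ∈ B
  · obtain ⟨B', hB', h⟩ := hB.exists_tail hx hxz
    exact ⟨B', hB'.trans subset_union_right, h⟩
  obtain ⟨d, hd, A', hA', hxd, hA'B⟩ := hA.exists_first_hit hB.isClosed hx hB.left_mem
  rcases eq_or_ne d z with rfl | hdz
  · exact ⟨A', hA'.trans subset_union_left, hxd⟩
  obtain ⟨B', hB', hdz'⟩ := hB.exists_tail hd hdz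
  exact ⟨A' ∪ B', union_subset_union hA' hB',
    hxd.union hdz' ((inter_subset_inter_right _ hB').trans hA'B)⟩

end IsArc

/-- The points `x` and `y` of `W` coincide or are joined by an arc inside `W`. Unlike `JoinedIn`,
this provides an injective path. -/
def ArcJoinedIn (W : Set X) (x y : X) : Prop :=
  (x = y ∧ x ∈ W) ∨ ∃ A ⊆ W, IsArc A x y

namespace ArcJoinedIn

variable {V W : Set X}

lemma symm (h : ArcJoinedIn W x y) : ArcJoinedIn W y x :=
  h.imp (fun ⟨hxy, hx⟩ => ⟨hxy.symm, hxy ▸ hx⟩) fun ⟨A, hA, hxy⟩ => ⟨A, hA, hxy.symm⟩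

lemma mono (hVW : V ⊆ W) (h : ArcJoinedIn V x y) : ArcJoinedIn W x y :=
  h.imp (And.imp_right (@hVW x)) fun ⟨A, hA, hxy⟩ => ⟨A, hA.trans hVW, hxy⟩

lemma left_mem (h : ArcJoinedIn W x y) : x ∈ W :=
  h.elim And.right fun ⟨_, hA, hxy⟩ => hA hxy.left_mem

lemma right_mem (h : ArcJoinedIn W x y) : y ∈ W :=
  h.symm.left_mem

lemma exists_isArc (h : ArcJoinedIn W x y) (hxy : x ≠ y) : ∃ A ⊆ W, IsArc A x y :=
  h.resolve_left fun h => hxy h.1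

lemma trans [T2Space X] (hxy : ArcJoinedIn W x y) (hyz : ArcJoinedIn W y z) :
    ArcJoinedIn W x z := by
  rcases eq_or_ne x z with rfl | hxz
  · exact .inl ⟨rfl, hxy.left_mem⟩
  rcases hxy with ⟨rfl, -⟩ | ⟨A, hA, hxy⟩
  · exact hyz
  rcases hyz with ⟨rfl, -⟩ | ⟨B, hB, hyz⟩
  · exact .inr ⟨A, hA, hxy⟩
  obtain ⟨C, hC, hxz⟩ := hxy.exists_trans hyz hxz
  exact .inr ⟨C, hC.trans (union_subset hA hB), hxz⟩

end ArcJoinedIn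

lemma IsArc.arcJoinedIn_diff_singleton (h : IsArc A x y) (hc : c ∈ A) (hcy : c ≠ y) :
    ArcJoinedIn (A \ {y}) x c := by
  rcases eq_or_ne c x with rfl | hcx
  · exact .inl ⟨rfl, hc, hcy⟩
  obtain ⟨A₁, A₂, hA₁, hA₂, rfl, hA₁₂⟩ := h.exists_split hc hcx hcy
  have hy : y ∉ A₁ := fun hy => hcy (hA₁₂.subset ⟨hy, hA₂.right_mem⟩).symm
  exact .inr ⟨A₁, subset_sdiff_singleton subset_union_left hy, hA₁⟩

/-- `C` is a simple closed curve, cut by its points `x` and `y` into two arcs. -/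
def IsCircle (C : Set X) (x y : X) : Prop :=
  ∃ A B, IsArc A x y ∧ IsArc B x y ∧ A ∩ B ⊆ {x, y} ∧ A ∪ B = C

namespace IsCircle

lemma left_mem (h : IsCircle C x y) : x ∈ C := by
  obtain ⟨A, B, hA, -, -, rfl⟩ := h
  exact .inl hA.left_mem

lemma symm (h : IsCircle C x y) : IsCircle C y x := by
  obtain ⟨A, B, hA, hB, hAB, rfl⟩ := h
  exact ⟨A, B, hA.symm, hB.symm, pair_comm x y ▸ hAB, rfl⟩

lemma right_mem (h : IsCircle C x y) : y ∈ C :=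
  h.symm.left_mem

lemma ne (h : IsCircle C x y) : x ≠ y := by
  obtain ⟨A, B, hA, -, -, -⟩ := h
  exact hA.ne

lemma isClosed [T2Space X] (h : IsCircle C x y) : IsClosed C := by
  obtain ⟨A, B, hA, hB, -, rfl⟩ := h
  exact hA.isClosed.union hB.isClosed

lemma of_mem_right (h : IsCircle C x y) (hz : z ∈ C) (hxz : x ≠ z) : IsCircle C x z := by
  obtain ⟨A, B, hA, hB, hAB, rfl⟩ := h
  wlog hzA : z ∈ A generalizing A B
  · rw [union_comm]
    exact this B A hB hA (inter_comm A B ▸ hAB) (union_comm A B ▸ hz) (hz.resolve_left hzA)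
  rcases eq_or_ne z y with rfl | hzy
  · exact ⟨A, B, hA, hB, hAB, rfl⟩
  obtain ⟨A₁, A₂, hA₁, hA₂, rfl, hA₁₂⟩ := hA.exists_split hzA hxz.symm hzy
  have hx : x ∉ A₂ := fun h => hxz (hA₁₂.subset ⟨hA₁.left_mem, h⟩)
  have hy : y ∉ A₁ := fun h => hzy (hA₁₂.subset ⟨h, hA₂.right_mem⟩).symm
  refine ⟨A₁, B ∪ A₂, hA₁, hB.union hA₂.symm ?_, ?_, by rw [union_comm B, union_assoc]⟩
  · rintro w ⟨hwB, hwA⟩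
    exact (hAB ⟨.inr hwA, hwB⟩).resolve_left fun h => hx (h ▸ hwA)
  · rintro w ⟨hwA, hwB | hwA'⟩
    · exact .inl ((hAB ⟨.inl hwA, hwB⟩).resolve_right fun h => hy (h ▸ hwA))
    · exact .inr (hA₁₂.subset ⟨hwA, hwA'⟩)

lemma of_mem (h : IsCircle C x y) (hc : c ∈ C) (hd : d ∈ C) (hcd : c ≠ d) : IsCircle C c d := by
  rcases eq_or_ne x c with rfl | hxc
  · exact h.of_mem_right hd hcd
  · exact (h.of_mem_right hc hxc).symm.of_mem_right hd hcd

end IsCircle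

/-- `P ∪ Q ∪ R` is a theta curve: three arcs from `a` to `b` with no other common points. -/
structure IsThetaCurve (P Q R : Set X) (a b : X) : Prop where
  isArc₁ : IsArc P a b
  isArc₂ : IsArc Q a b
  isArc₃ : IsArc R a b
  inter₁₂ : P ∩ Q ⊆ {a, b}
  inter₁₃ : P ∩ R ⊆ {a, b}
  inter₂₃ : Q ∩ R ⊆ {a, b}

lemma IsThetaCurve.exists_isArc_avoiding {P Q R : Set X} {a b p q : X}
    (h : IsThetaCurve P Q R a b) (hp : p ∉ ({a, b} : Set X)) (hq : q ∉ ({a, b} : Set X)) :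
    ∃ A, IsArc A a b ∧ p ∉ A ∧ q ∉ A := by
  have disjoint_of_inter {w : X} (hw : w ∉ ({a, b} : Set X)) :
      (w ∈ P → w ∉ Q) ∧ (w ∈ P → w ∉ R) ∧ (w ∈ Q → w ∉ R) :=
    ⟨fun h₁ h₂ => hw (h.inter₁₂ ⟨h₁, h₂⟩), fun h₁ h₃ => hw (h.inter₁₃ ⟨h₁, h₃⟩),
      fun h₂ h₃ => hw (h.inter₂₃ ⟨h₂, h₃⟩)⟩
  have hp' := disjoint_of_inter hp
  have hq' := disjoint_of_inter hq
  by_contra! hmeet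
  have hP := hmeet P h.isArc₁
  have hQ := hmeet Q h.isArc₂
  have hR := hmeet R h.isArc₃
  tauto

lemma IsCircle.exists_isThetaCurve {R : Set X} (hC : IsCircle C x y) (hc : c ∈ C) (hd : d ∈ C)
    (hR : IsArc R c d) (hRC : R ∩ C ⊆ {c, d}) : ∃ P Q, IsThetaCurve P Q R c d := by
  obtain ⟨P, Q, hP, hQ, hPQ, rfl⟩ := hC.of_mem hc hd hR.ne
  exact ⟨P, Q, hP, hQ, hR, hPQ, fun w hw => hRC ⟨hw.2, .inl hw.1⟩,
    fun w hw => hRC ⟨hw.2, .inr hw.1⟩⟩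

variable (X) in
/-- The space `X` contains no theta curve. -/
def ThetaFree : Prop :=
  ∀ (P Q R : Set X) (a b : X), ¬ IsThetaCurve P Q R a b

namespace ThetaFree

variable [T2Space X]

lemma isArc_subset_isCircle (hX : ThetaFree X) (hC : IsCircle C x y) (hA : IsArc A c d)
    (hc : c ∈ C) (hd : d ∈ C) : A ⊆ C := by
  intro z hz
  by_contra hzC
  obtain ⟨c', hc', d', hd', R, -, hR, hRC⟩ := hA.exists_chord hC.isClosed hc hd hz hzC
  obtain ⟨P, Q, hPQR⟩ := hC.exists_isThetaCurve hc' hd' hR hRC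
  exact hX P Q R c' d' hPQR

lemma isCircle_subset_isCircle (hX : ThetaFree X) {C' : Set X} (hC : IsCircle C x y)
    (hC' : IsCircle C' x y) : C ⊆ C' := by
  obtain ⟨A, B, hA, hB, -, rfl⟩ := hC
  exact union_subset (hX.isArc_subset_isCircle hC' hA hC'.left_mem hC'.right_mem)
    (hX.isArc_subset_isCircle hC' hB hC'.left_mem hC'.right_mem)

lemma isCircle_unique (hX : ThetaFree X) {C' : Set X} (hC : IsCircle C x y)
    (hC' : IsCircle C' x y) : C = C' :=
  (hX.isCircle_subset_isCircle hC hC').antisymm (hX.isCircle_subset_isCircle hC' hC)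

lemma mem_or_mem_of_isArc (hX : ThetaFree X) {P Q T : Set X} {u v p q : X} (hP : IsArc P u v)
    (hQ : IsArc Q u v) (hPQ : P ∩ Q ⊆ {u, v}) (hp : p ∈ P) (hq : q ∈ Q) (hT : IsArc T u v) :
    p ∈ T ∨ q ∈ T := by
  by_contra! ⟨hpT, hqT⟩
  obtain ⟨P₁, P₂, hP₁, hP₂, rfl, hP₁₂⟩ := hP.exists_split hp
    (ne_of_mem_of_not_mem hT.left_mem hpT).symm (ne_of_mem_of_not_mem hT.right_mem hpT).symm
  obtain ⟨Q₁, Q₂, hQ₁, hQ₂, rfl, hQ₁₂⟩ := hQ.exists_split hq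
    (ne_of_mem_of_not_mem hT.left_mem hqT).symm (ne_of_mem_of_not_mem hT.right_mem hqT).symm
  have hTC : T ⊆ (P₁ ∪ P₂) ∪ (Q₁ ∪ Q₂) :=
    hX.isArc_subset_isCircle ⟨_, _, hP, hQ, hPQ, rfl⟩ hT (.inl hP.left_mem) (.inl hP.right_mem)
  -- `p` and `q` cut the circle into a closed part around `u` and a closed part around `v`.
  obtain ⟨w, hwT, hw₁, hw₂⟩ := isPreconnected_closed_iff.1 hT.isPreconnected (P₁ ∪ Q₁) (P₂ ∪ Q₂)
    (hP₁.isClosed.union hQ₁.isClosed) (hP₂.isClosed.union hQ₂.isClosed)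
    (hTC.trans (union_union_union_comm P₁ P₂ Q₁ Q₂).subset) ⟨u, hT.left_mem, .inl hP₁.left_mem⟩
    ⟨v, hT.right_mem, .inl hP₂.right_mem⟩
  have not_mem_inter {w' : X} (hw' : w' ∈ T) :
      (w' ∈ P₁ → w' ∉ P₂) ∧ (w' ∈ Q₁ → w' ∉ Q₂) :=
    ⟨fun h₁ h₂ => hpT (hP₁₂.subset ⟨h₁, h₂⟩ ▸ hw'), fun h₁ h₂ => hqT (hQ₁₂.subset ⟨h₁, h₂⟩ ▸ hw')⟩
  have hu := not_mem_inter hT.left_mem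
  have hv := not_mem_inter hT.right_mem
  have hw := not_mem_inter hwT
  rcases hw₁ with hwP | hwQ
  · have hwQ := hw₂.resolve_left (hw.1 hwP)
    rcases hPQ ⟨.inl hwP, .inr hwQ⟩ with rfl | rfl
    · exact hu.2 hQ₁.left_mem hwQ
    · exact hv.1 hwP hP₂.right_mem
  · have hwP := hw₂.resolve_right (hw.2 hwQ)
    rcases hPQ ⟨.inr hwP, .inl hwQ⟩ with rfl | rfl
    · exact hu.1 hP₁.left_mem hwP
    · exact hv.2 hwQ hQ₂.right_mem

lemma not_arcJoinedIn_compl_pair (hX : ThetaFree X) {G₀ G₁ S : Set X} {a b p q u v : X}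
    (hG₀ : IsArc G₀ a p) (hG₁ : IsArc G₁ p b) (hG : G₀ ∩ G₁ ⊆ {p}) (hS : IsArc S u v)
    (hu : u ∈ G₀) (hv : v ∈ G₁) (hSG₀ : S ∩ G₀ ⊆ {u}) (hSG₁ : S ∩ G₁ ⊆ {v}) (hp : p ∉ S)
    (hq : q ∈ S) (hqu : q ≠ u) (hqv : q ≠ v) : ¬ ArcJoinedIn {p, q}ᶜ a b := by
  intro hab
  have hup : u ≠ p := ne_of_mem_of_not_mem hS.left_mem hp
  have hvp : v ≠ p := ne_of_mem_of_not_mem hS.right_mem hp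
  have diff_subset {G : Set X} (hqG : q ∉ G) : G \ {p} ⊆ {p, q}ᶜ := fun w hw =>
    not_or.2 ⟨hw.2, ne_of_mem_of_not_mem hw.1 hqG⟩
  have hau : ArcJoinedIn {p, q}ᶜ a u :=
    (hG₀.arcJoinedIn_diff_singleton hu hup).mono (diff_subset fun h => hqu (hSG₀ ⟨hq, h⟩))
  have hbv : ArcJoinedIn {p, q}ᶜ b v :=
    (hG₁.symm.arcJoinedIn_diff_singleton hv hvp).mono (diff_subset fun h => hqv (hSG₁ ⟨hq, h⟩))
  obtain ⟨T, hTpq, hT⟩ := (hau.symm.trans (hab.trans hbv)).exists_isArc hS.ne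
  obtain ⟨A₀, hA₀, hup'⟩ := hG₀.exists_tail hu hup
  obtain ⟨A₁, hA₁, hvp'⟩ := hG₁.symm.exists_tail hv hvp
  have hP : IsArc (A₀ ∪ A₁) u v := hup'.union hvp'.symm ((inter_subset_inter hA₀ hA₁).trans hG)
  have hPS : (A₀ ∪ A₁) ∩ S ⊆ {u, v} := by
    rw [union_inter_distrib_right]
    exact union_subset_union (fun w hw => hSG₀ ⟨hw.2, hA₀ hw.1⟩)
      fun w hw => hSG₁ ⟨hw.2, hA₁ hw.1⟩
  rcases hX.mem_or_mem_of_isArc hP hS hPS (.inl hup'.right_mem) hq hT with hpT | hqT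
  · exact hTpq hpT (.inl rfl)
  · exact hTpq hqT (.inr rfl)

end ThetaFree

end Arc

section Loop

variable {X : Type*} [MetricSpace X] {γ : ℝ → X} {x y z : X} {C C' : Set X}

lemma IsLoop.isCircle (h : IsLoop γ x) (hz : z ∈ γ '' Icc 0 1) (hzx : z ≠ x) :
    IsCircle (γ '' Icc 0 1) x z := by
  obtain ⟨hγ, hi, h₀, h₁⟩ := h
  obtain ⟨t, ht, rfl⟩ := hz
  have ht₀ : 0 < t := ht.1.lt_of_ne fun h => hzx (h ▸ h₀)
  have ht₁ : t < 1 := ht.2.lt_of_ne fun h => hzx (h ▸ h₁)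
  have hi₁ : InjOn γ (Icc 0 t) := hi.mono (Icc_subset_Ico_right ht₁)
  have hi₂ : InjOn γ (Icc t 1) := by
    rw [← Ico_insert_right ht.2, injOn_insert right_notMem_Ico]
    refine ⟨hi.mono (Ico_subset_Ico_left ht.1), ?_⟩
    rintro ⟨s, hs, hs₁⟩
    exact (ht₀.trans_le hs.1).ne' (hi ⟨ht.1.trans hs.1, hs.2⟩ (by simp) (by rw [hs₁, h₁, h₀]))
  have hA := isArc_image_Icc ht₀ (hγ.mono (Icc_subset_Icc_right ht.2)) hi₁
  have hB := isArc_image_Icc ht₁ (hγ.mono (Icc_subset_Icc_left ht.1)) hi₂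
  rw [h₀] at hA
  rw [h₁] at hB
  refine ⟨_, _, hA, hB.symm, ?_, by rw [← image_union, Icc_union_Icc_eq_Icc ht.1 ht.2]⟩
  rintro _ ⟨⟨s, hs, rfl⟩, s', hs', hss'⟩
  rcases hs'.2.eq_or_lt with rfl | hs'₁
  · exact .inl (hss' ▸ h₁)
  · obtain rfl := hi ⟨ht.1.trans hs'.1, hs'₁⟩ ⟨hs.1, hs.2.trans_lt ht₁⟩ hss'
    exact .inr (congrArg γ (hs.2.antisymm hs'.1))

lemma IsCircle.exists_isLoop (h : IsCircle C x y) : ∃ γ, IsLoop γ x ∧ γ '' Icc 0 1 = C := by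
  obtain ⟨A, B, hA, hB, hAB, rfl⟩ := h
  obtain ⟨γ, hγ, h₀, hy, h₁, hi₁, hi₂, rfl, rfl⟩ := hA.exists_param_trans hB.symm
  have hIcc : Icc (0 : ℝ) (1 / 2) ∪ Icc (1 / 2) 1 = Icc 0 1 :=
    Icc_union_Icc_eq_Icc (by norm_num) (by norm_num)
  have hIco : Icc (0 : ℝ) (1 / 2) ∪ Ioo (1 / 2) 1 = Ico 0 1 :=
    Icc_union_Ioo_eq_Ico (by norm_num) (by norm_num)
  have hdisj : Disjoint (Icc (0 : ℝ) (1 / 2)) (Ioo (1 / 2) 1) :=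
    disjoint_left.2 fun t ht ht' => ht.2.not_gt ht'.1
  refine ⟨γ, ⟨hγ, ?_, h₀, h₁⟩, by rw [← image_union, hIcc]⟩
  rw [← hIco, injOn_union hdisj]
  refine ⟨hi₁, hi₂.mono Ioo_subset_Icc_self, fun s hs t ht hst => ?_⟩
  have ht' : t ∈ Icc (1 / 2) 1 := Ioo_subset_Icc_self ht
  rcases hAB ⟨hst ▸ mem_image_of_mem γ hs, mem_image_of_mem γ ht'⟩ with htx | hty
  · exact ht.2.ne (hi₂ ht' (by norm_num) (htx.trans h₁.symm))
  · exact ht.1.ne' (hi₂ ht' (by norm_num) (hty.trans hy.symm))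

lemma IsVernationTree.isCircle_unique (hX : IsVernationTree X) (hC : IsCircle C x y)
    (hC' : IsCircle C' x y) : C = C' := by
  have hxy := hC.ne
  have hyC := hC.right_mem
  have hyC' := hC'.right_mem
  obtain ⟨γ, hγ, rfl⟩ := hC.exists_isLoop
  obtain ⟨γ', hγ', rfl⟩ := hC'.exists_isLoop
  exact (hX.2 x γ γ' hγ hγ').resolve_right fun h => hxy (h.subset ⟨hyC, hyC'⟩).symm

lemma IsVernationTree.thetaFree (hX : IsVernationTree X) : ThetaFree X := by
  intro P Q R a b h
  have hPQR : P ∪ Q = P ∪ R := hX.isCircle_unique ⟨P, Q, h.isArc₁, h.isArc₂, h.inter₁₂, rfl⟩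
    ⟨P, R, h.isArc₁, h.isArc₃, h.inter₁₃, rfl⟩
  obtain ⟨w, hwQ, hwa, hwb⟩ := h.isArc₂.exists_mem_ne_ne
  have hw : w ∉ ({a, b} : Set X) := not_or.2 ⟨hwa, hwb⟩
  rcases hPQR.subset (.inr hwQ) with hwP | hwR
  · exact hw (h.inter₁₂ ⟨hwP, hwQ⟩)
  · exact hw (h.inter₂₃ ⟨hwQ, hwR⟩)

lemma ThetaFree.isVernationTree (hX : ThetaFree X) (hgeo : IsGeodesicSpace X) :
    IsVernationTree X := by
  refine ⟨hgeo, fun x γ₁ γ₂ h₁ h₂ => ?_⟩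
  have hx {γ : ℝ → X} (h : IsLoop γ x) : x ∈ γ '' Icc 0 1 := ⟨0, by simp, h.2.2.1⟩
  refine or_iff_not_imp_right.2 fun hne => ?_
  obtain ⟨y, ⟨hy₁, hy₂⟩, hyx⟩ : ∃ y ∈ γ₁ '' Icc 0 1 ∩ γ₂ '' Icc 0 1, y ≠ x := by
    by_contra! hsub
    exact hne (Subset.antisymm hsub (singleton_subset_iff.2 ⟨hx h₁, hx h₂⟩))
  exact hX.isCircle_unique (h₁.isCircle hy₁ hyx) (h₂.isCircle hy₂ hyx)

end Loop

section Geodesic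

variable {X : Type*} [MetricSpace X] {a b : X} {r : ℝ}

lemma IsGeodesicSpace.exists_isArc (hX : IsGeodesicSpace X) (hab : a ≠ b) :
    ∃ A, IsArc A a b ∧ ∀ w ∈ A, dist a w + dist w b = dist a b := by
  obtain ⟨γ, rfl, rfl, hγ⟩ := hX a b
  have h₀ : (0 : ℝ) ∈ Icc (0 : ℝ) 1 := left_mem_Icc.2 zero_le_one
  have h₁ : (1 : ℝ) ∈ Icc (0 : ℝ) 1 := right_mem_Icc.2 zero_le_one
  have hcont : ContinuousOn γ (Icc 0 1) :=
    (LipschitzOnWith.of_dist_le_mul (K := nndist (γ 0) (γ 1)) fun s hs t ht => by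
      rw [hγ s hs t ht, coe_nndist, Real.dist_eq, mul_comm]).continuousOn
  have hinj : InjOn γ (Icc 0 1) := fun s hs t ht hst => by
    have := hγ s hs t ht
    rw [hst, dist_self, zero_eq_mul, or_iff_left (dist_ne_zero.2 hab)] at this
    exact sub_eq_zero.1 (abs_eq_zero.1 this)
  refine ⟨γ '' Icc 0 1, isArc_image_Icc zero_lt_one hcont hinj, ?_⟩
  rintro _ ⟨t, ht, rfl⟩
  rw [hγ 0 h₀ t ht, hγ t ht 1 h₁, ← add_mul, zero_sub, abs_neg, abs_of_nonneg ht.1, abs_sub_comm,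
    abs_of_nonneg (sub_nonneg.2 ht.2), add_sub_cancel, one_mul]

lemma IsGeodesicSpace.arcJoinedIn {W : Set X} (hX : IsGeodesicSpace X)
    (hW : ∀ w, dist a w + dist w b = dist a b → w ∈ W) : ArcJoinedIn W a b := by
  rcases eq_or_ne a b with rfl | hab
  · exact .inl ⟨rfl, hW a (by simp)⟩
  · obtain ⟨A, hA, hdist⟩ := hX.exists_isArc hab
    exact .inr ⟨A, fun w hw => hW w (hdist w hw), hA⟩

lemma IsArc.exists_dist_eq {A : Set X} {u v : X} (h : IsArc A u v)
    (hr : r ∈ Icc (dist a u) (dist a v)) : ∃ w ∈ A, dist a w = r :=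
  h.isPreconnected.intermediate_value h.left_mem h.right_mem (by fun_prop) hr

lemma IsGeodesicSpace.exists_dist_eq (hX : IsGeodesicSpace X) (hr : r ∈ Icc 0 (dist a b)) :
    ∃ p, dist a p = r ∧ dist p b = dist a b - r := by
  rcases eq_or_ne a b with rfl | hab
  · rw [dist_self, Icc_self] at hr
    obtain rfl := hr
    exact ⟨a, by simp⟩
  · obtain ⟨A, hA, hdist⟩ := hX.exists_isArc hab
    obtain ⟨p, hp, rfl⟩ := hA.exists_dist_eq (by rwa [dist_self] : r ∈ Icc (dist a a) (dist a b))
    exact ⟨p, rfl, eq_sub_of_add_eq' (hdist p hp)⟩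

lemma IsVernationTree.exists_separating_pair (hX : IsVernationTree X)
    (hr : r ∈ Icc 0 (dist a b)) :
    ∃ p q, dist a p = r ∧ dist a q = r ∧ ¬ ArcJoinedIn {p, q}ᶜ a b := by
  obtain ⟨p, rfl, hpb⟩ := hX.1.exists_dist_eq hr
  by_cases hp : ArcJoinedIn {p}ᶜ a b
  swap
  · exact ⟨p, p, rfl, rfl, by rwa [pair_eq_singleton]⟩
  have hab : a ≠ b := by
    rintro rfl
    exact hp.left_mem (dist_le_zero.1 (hr.2.trans (dist_self a).le))
  obtain ⟨S, hSp, hS⟩ := hp.exists_isArc hab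
  obtain ⟨G₀, hG₀, hdist₀⟩ := hX.1.exists_isArc (show a ≠ p from hp.left_mem)
  obtain ⟨G₁, hG₁, hdist₁⟩ := hX.1.exists_isArc (show b ≠ p from hp.right_mem).symm
  have hlt {w : X} (hw : w ∈ G₀) (hwp : w ≠ p) : dist a w < dist a p := by
    linarith [hdist₀ w hw, dist_pos.2 hwp]
  have hgt {w : X} (hw : w ∈ G₁) (hwp : w ≠ p) : dist a p < dist a w := by
    linarith [hdist₁ w hw, dist_pos.2 hwp.symm, dist_triangle a w b]
  have hG : G₀ ∩ G₁ ⊆ {p} := fun w hw => by_contra fun hwp =>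
    (hlt hw.1 hwp).not_gt (hgt hw.2 hwp)
  obtain ⟨u, hu, v, hv, S', hS'S, hS', hS'G₀, hS'G₁⟩ :=
    hS.exists_crossing hG₀.isClosed hG₁.isClosed hG₀.left_mem hG₁.right_mem
      (subset_compl_iff_disjoint_right.1 (hSp.trans (compl_subset_compl.2 hG)))
  have hpS' : p ∉ S' := fun h => hSp (hS'S h) rfl
  have hup := hlt hu (ne_of_mem_of_not_mem hS'.left_mem hpS')
  have hvp := hgt hv (ne_of_mem_of_not_mem hS'.right_mem hpS')
  obtain ⟨q, hq, hqp⟩ := hS'.exists_dist_eq ⟨hup.le, hvp.le⟩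
  refine ⟨p, q, rfl, hqp, hX.thetaFree.not_arcJoinedIn_compl_pair hG₀ hG₁ hG hS' hu hv hS'G₀ hS'G₁
    hpS' hq ?_ ?_⟩
  · rintro rfl
    exact hup.ne hqp
  · rintro rfl
    exact hvp.ne' hqp

end Geodesic

section ApproxIsometry

variable {X Y : Type*} [MetricSpace X] [MetricSpace Y] {f : X → Y} {ε r : ℝ}

/-- `f` preserves distances up to `ε` and has `ε`-dense image: the `ε`-isometries of Burago, Burago
and Ivanov, without continuity. A Gromov-Hausdorff distance less than `ε / 2` provides one. -/
structure IsApproxIsometry (f : X → Y) (ε : ℝ) : Prop where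
  abs_dist_sub_dist_le : ∀ x x', |dist (f x) (f x') - dist x x'| ≤ ε
  exists_dist_le : ∀ y, ∃ x, dist (f x) y ≤ ε

lemma exists_isApproxIsometry_of_ghDist_lt [CompactSpace X] [Nonempty X] [CompactSpace Y]
    [Nonempty Y] (h : GromovHausdorff.ghDist X Y < ε / 2) :
    ∃ f : X → Y, IsApproxIsometry f ε := by
  rw [← GromovHausdorff.hausdorffDist_optimal] at h
  set φ := GromovHausdorff.optimalGHInjl X Y
  set ψ := GromovHausdorff.optimalGHInjr X Y
  have hφ : Isometry φ := GromovHausdorff.isometry_optimalGHInjl X Y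
  have hψ : Isometry ψ := GromovHausdorff.isometry_optimalGHInjr X Y
  have hfin : Metric.hausdorffEDist (range φ) (range ψ) ≠ ⊤ :=
    Metric.hausdorffEDist_ne_top_of_nonempty_of_bounded (range_nonempty _) (range_nonempty _)
      (isCompact_range hφ.continuous).isBounded (isCompact_range hψ.continuous).isBounded
  have hnear (x : X) : ∃ y, dist (φ x) (ψ y) < ε / 2 := by
    simpa using Metric.exists_dist_lt_of_hausdorffDist_lt (mem_range_self x) h hfin
  choose f hf using hnear
  refine ⟨f, fun x x' => ?_, fun y => ?_⟩
  · rw [← hφ.dist_eq, ← hψ.dist_eq, abs_sub_comm]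
    linarith [dist_dist_dist_le (φ x) (φ x') (ψ (f x)) (ψ (f x')), hf x, hf x',
      Real.dist_eq (dist (φ x) (φ x')) (dist (ψ (f x)) (ψ (f x')))]
  · obtain ⟨_, ⟨x, rfl⟩, hx⟩ :=
      Metric.exists_dist_lt_of_hausdorffDist_lt' (mem_range_self y) h hfin
    refine ⟨x, ?_⟩
    rw [← hψ.dist_eq]
    linarith [dist_triangle_left (ψ (f x)) (ψ y) (φ x), hf x]

lemma IsApproxIsometry.arcJoinedIn_of_dist_lt {F : Set X} {x x' : X} {w w' : Y}
    (hf : IsApproxIsometry f ε) (hX : IsGeodesicSpace X) (hF : ∀ z ∈ F, r ≤ dist w (f z))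
    (hww' : dist w w' < r - 5 * ε) (hx : dist (f x) w ≤ ε) (hx' : dist (f x') w' ≤ ε) :
    ArcJoinedIn Fᶜ x x' := by
  refine hX.arcJoinedIn fun z hz hzF => (hF z hzF).not_gt ?_
  calc
    dist w (f z) ≤ dist (f x) w + dist (f x) (f z) := dist_triangle_left _ _ _
    _ ≤ ε + (dist x z + ε) := by
      linarith [le_of_abs_le (hf.abs_dist_sub_dist_le x z)]
    _ ≤ 2 * ε + dist x x' := by linarith [dist_nonneg (x := z) (y := x')]
    _ ≤ 3 * ε + dist (f x) (f x') := by
      linarith [neg_le_of_abs_le (hf.abs_dist_sub_dist_le x x')]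
    _ ≤ 5 * ε + dist w w' := by
      linarith [dist_triangle4_right (f x) (f x') w w']
    _ < r := by linarith

lemma IsApproxIsometry.arcJoinedIn {P : Set Y} {F : Set X} {x x' : X} {w w' : Y}
    (hf : IsApproxIsometry f ε) (hX : IsGeodesicSpace X) (hP : IsPreconnected P)
    (hF : ∀ w ∈ P, ∀ z ∈ F, r ≤ dist w (f z)) (hr : 5 * ε < r) (hw : w ∈ P) (hw' : w' ∈ P)
    (hx : dist (f x) w ≤ ε) (hx' : dist (f x') w' ≤ ε) : ArcJoinedIn Fᶜ x x' := by
  refine hP.induction₂ (fun w w' => ∀ x x', dist (f x) w ≤ ε → dist (f x') w' ≤ ε →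
    ArcJoinedIn Fᶜ x x') (fun w hw => ?_) (fun w w' w'' _ _ _ h h' x x'' hx hx'' => ?_)
    (fun w w' _ _ h x' x hx' hx => (h x x' hx hx').symm) hw hw' x x' hx hx'
  · filter_upwards [mem_nhdsWithin_of_mem_nhds (Metric.ball_mem_nhds w (sub_pos.2 hr))]
      with w' hw' x x' hx hx'
    exact hf.arcJoinedIn_of_dist_lt hX (hF w hw) (Metric.mem_ball'.1 hw') hx hx'
  · obtain ⟨x', hx'⟩ := hf.exists_dist_le w'
    exact (h x x' hx hx').trans (h' x' x'' hx' hx'')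

end ApproxIsometry

namespace IsApproxIsometry

variable {ι : Type*} {X : ι → Type*} [∀ i, MetricSpace (X i)] {Y : Type*} [MetricSpace Y]
  {f : ∀ i, X i → Y} {δ : ι → ℝ} {l : Filter ι} {U : Ultrafilter ι} {x x' p q : ∀ i, X i}
  {y y' a b : Y} {d : ℝ}

lemma exists_tendsto (hf : ∀ i, IsApproxIsometry (f i) (δ i)) (hδ : Tendsto δ l (𝓝 0)) (y : Y) :
    ∃ x : ∀ i, X i, (∀ i, dist (f i (x i)) y ≤ δ i) ∧ Tendsto (fun i => f i (x i)) l (𝓝 y) := by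
  choose x hx using fun i => (hf i).exists_dist_le y
  exact ⟨x, hx, tendsto_iff_dist_tendsto_zero.2 (squeeze_zero (fun _ => dist_nonneg) hx hδ)⟩

lemma tendsto_dist_sub_dist (hf : ∀ i, IsApproxIsometry (f i) (δ i)) (hδ : Tendsto δ l (𝓝 0))
    (x x' : ∀ i, X i) :
    Tendsto (fun i => dist (f i (x i)) (f i (x' i)) - dist (x i) (x' i)) l (𝓝 0) :=
  squeeze_zero_norm (fun i => (hf i).abs_dist_sub_dist_le (x i) (x' i)) hδ

lemma tendsto_dist (hf : ∀ i, IsApproxIsometry (f i) (δ i)) (hδ : Tendsto δ l (𝓝 0))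
    (hx : Tendsto (fun i => f i (x i)) l (𝓝 y)) (hx' : Tendsto (fun i => f i (x' i)) l (𝓝 y')) :
    Tendsto (fun i => dist (x i) (x' i)) l (𝓝 (dist y y')) := by
  simpa using (hx.dist hx').sub (tendsto_dist_sub_dist hf hδ x x')

lemma exists_tendsto_dist_eq [ProperSpace Y] (hf : ∀ i, IsApproxIsometry (f i) (δ i))
    (hδ : Tendsto δ U (𝓝 0)) (hx : Tendsto (fun i => f i (x i)) U (𝓝 y))
    (hd : Tendsto (fun i => dist (x i) (x' i)) U (𝓝 d)) :
    ∃ y', Tendsto (fun i => f i (x' i)) U (𝓝 y') ∧ dist y y' = d := by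
  have hfd : Tendsto (fun i => dist (f i (x i)) (f i (x' i))) U (𝓝 d) := by
    simpa using (tendsto_dist_sub_dist hf hδ x x').add hd
  have hbounded : ∀ᶠ i in U, f i (x' i) ∈ Metric.closedBall y (d + 1) := by
    have hle : Tendsto (fun i => dist (f i (x i)) (f i (x' i)) + dist (f i (x i)) y) U (𝓝 d) := by
      simpa using hfd.add (tendsto_iff_dist_tendsto_zero.1 hx)
    filter_upwards [hle.eventually_le_const (lt_add_one d)] with i hi
    exact (dist_triangle_left _ _ _).trans hi
  obtain ⟨y', -, hy'⟩ :=
    (isCompact_closedBall y (d + 1)).ultrafilter_le_nhds' (U.map fun i => f i (x' i)) hbounded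
  exact ⟨y', hy', tendsto_nhds_unique (hx.dist hy') hfd⟩

lemma isGeodesicSpace [ProperSpace Y] (hf : ∀ i, IsApproxIsometry (f i) (δ i))
    (hδ : Tendsto δ U (𝓝 0)) (hX : ∀ i, IsGeodesicSpace (X i)) : IsGeodesicSpace Y := by
  intro y y'
  have : Nonempty Y := ⟨y⟩
  obtain ⟨x, -, hx⟩ := exists_tendsto hf hδ y
  obtain ⟨x', -, hx'⟩ := exists_tendsto hf hδ y'
  have hdist := tendsto_dist hf hδ hx hx'
  choose γ hγ₀ hγ₁ hγ using fun i => hX i (x i) (x' i)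
  have hlim : ∀ t ∈ Icc (0 : ℝ) 1, ∃ w, Tendsto (fun i => f i (γ i t)) U (𝓝 w) := fun t ht => by
    have hdist_t : Tendsto (fun i => dist (x i) (γ i t)) U (𝓝 (|0 - t| * dist y y')) := by
      refine (hdist.const_mul |0 - t|).congr fun i => ?_
      rw [← hγ i 0 (left_mem_Icc.2 zero_le_one) t ht, hγ₀]
    exact (exists_tendsto_dist_eq hf hδ hx hdist_t).imp fun _ => And.left
  choose! Γ hΓ using hlim
  refine ⟨Γ, tendsto_nhds_unique (hΓ 0 (by simp)) (by simpa only [hγ₀] using hx),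
    tendsto_nhds_unique (hΓ 1 (by simp)) (by simpa only [hγ₁] using hx'), fun s hs t ht => ?_⟩
  refine tendsto_nhds_unique (tendsto_dist hf hδ (hΓ s hs) (hΓ t ht)) ?_
  simpa only [hγ _ s hs t ht] using hdist.const_mul |s - t|

lemma eventually_arcJoinedIn (hf : ∀ i, IsApproxIsometry (f i) (δ i)) (hδ : Tendsto δ l (𝓝 0))
    (hX : ∀ i, IsGeodesicSpace (X i)) {P : Set Y} (hPc : IsClosed P) (hP : IsPreconnected P)
    (ha : a ∈ P) (hb : b ∈ P) (hx : ∀ i, dist (f i (x i)) a ≤ δ i)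
    (hx' : ∀ i, dist (f i (x' i)) b ≤ δ i) (hp : Tendsto (fun i => f i (p i)) l (𝓝 y))
    (hq : Tendsto (fun i => f i (q i)) l (𝓝 y')) (hy : y ∉ P) (hy' : y' ∉ P) :
    ∀ᶠ i in l, ArcJoinedIn {p i, q i}ᶜ (x i) (x' i) := by
  have hpos {w : Y} (hw : w ∉ P) : 0 < Metric.infDist w P :=
    (hPc.notMem_iff_infDist_pos ⟨a, ha⟩).1 hw
  obtain ⟨r, hr, hrlt⟩ := exists_between (lt_min (hpos hy) (hpos hy'))
  have hfar {u : ι → Y} {w : Y} (hu : Tendsto u l (𝓝 w)) (hw : r < Metric.infDist w P) :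
      ∀ᶠ i in l, r < Metric.infDist (u i) P :=
    (((Metric.continuous_infDist_pt P).tendsto w).comp hu).eventually_const_lt hw
  filter_upwards [hfar hp (lt_min_iff.1 hrlt).1, hfar hq (lt_min_iff.1 hrlt).2,
    hδ.eventually_lt_const (show 0 < r / 5 by positivity)] with i hpi hqi hδi
  refine (hf i).arcJoinedIn (hX i) hP (r := r) ?_ (by linarith) ha hb (hx i) (hx' i)
  rintro w hw _ (rfl | rfl)
  · exact (hpi.trans_le (Metric.infDist_le_dist_of_mem hw)).le.trans (dist_comm _ _).le
  · exact (hqi.trans_le (Metric.infDist_le_dist_of_mem hw)).le.trans (dist_comm _ _).le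

lemma exists_separating_pair [ProperSpace Y] (hf : ∀ i, IsApproxIsometry (f i) (δ i))
    (hδ : Tendsto δ U (𝓝 0)) (hX : ∀ i, IsVernationTree (X i)) (a b : Y) :
    ∃ p q, dist a p = dist a b / 2 ∧ dist a q = dist a b / 2 ∧
      ∀ P, IsClosed P → IsPreconnected P → a ∈ P → b ∈ P → p ∈ P ∨ q ∈ P := by
  obtain ⟨x, hx, hxa⟩ := exists_tendsto hf hδ a
  obtain ⟨x', hx', hxb⟩ := exists_tendsto hf hδ b
  have hhalf (i : ι) : dist (x i) (x' i) / 2 ∈ Icc 0 (dist (x i) (x' i)) :=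
    ⟨div_nonneg dist_nonneg zero_le_two, half_le_self dist_nonneg⟩
  choose p q hp hq hpq using fun i => (hX i).exists_separating_pair (hhalf i)
  have hdist := (tendsto_dist hf hδ hxa hxb).div_const 2
  obtain ⟨p', hpp', hap'⟩ := exists_tendsto_dist_eq hf hδ hxa (hdist.congr fun i => (hp i).symm)
  obtain ⟨q', hqq', haq'⟩ := exists_tendsto_dist_eq hf hδ hxa (hdist.congr fun i => (hq i).symm)
  refine ⟨p', q', hap', haq', fun P hPc hP ha hb => ?_⟩
  by_contra! ⟨hp'P, hq'P⟩
  obtain ⟨i, hi⟩ := (eventually_arcJoinedIn hf hδ (fun i => (hX i).1) hPc hP ha hb hx hx' hpp' hqq'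
    hp'P hq'P).exists
  exact hpq i hi

lemma thetaFree [ProperSpace Y] (hf : ∀ i, IsApproxIsometry (f i) (δ i)) (hδ : Tendsto δ U (𝓝 0))
    (hX : ∀ i, IsVernationTree (X i)) : ThetaFree Y := by
  intro P Q R a b h
  obtain ⟨p, q, hp, hq, hpq⟩ := exists_separating_pair hf hδ hX a b
  have ne_endpoints {w : Y} (hw : dist a w = dist a b / 2) : w ∉ ({a, b} : Set Y) := by
    have hab : 0 < dist a b := dist_pos.2 h.isArc₁.ne
    rintro (rfl | rfl)
    · linarith [dist_self w]
    · linarith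
  obtain ⟨A, hA, hpA, hqA⟩ := h.exists_isArc_avoiding (ne_endpoints hp) (ne_endpoints hq)
  exact (hpq A hA.isClosed hA.isPreconnected hA.left_mem hA.right_mem).elim hpA hqA

end IsApproxIsometry

theorem statement19_general.{u, v} {Y : Type v} [MetricSpace Y] [ProperSpace Y]
    (h : ∀ ε > 0, ∃ (X : Type u) (_ : MetricSpace X),
      IsVernationTree X ∧ ∃ f : X → Y, IsApproxIsometry f ε) :
    IsVernationTree Y := by
  choose X _ hX f hf using fun n : ℕ => h (1 / ((n : ℝ) + 1)) Nat.one_div_pos_of_nat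
  have hδ : Tendsto (fun n : ℕ => 1 / ((n : ℝ) + 1)) (hyperfilter ℕ) (𝓝 0) :=
    tendsto_one_div_add_atTop_nhds_zero_nat.mono_left Nat.hyperfilter_le_atTop
  exact (IsApproxIsometry.thetaFree hf hδ hX).isVernationTree
    (IsApproxIsometry.isGeodesicSpace hf hδ fun n => (hX n).1)

theorem statement19 (X : ℕ → Type*) [∀ n, MetricSpace (X n)]
    [∀ n, CompactSpace (X n)] [∀ n, Nonempty (X n)]
    (hvern : ∀ n, IsVernationTree (X n))
    (Y : Type*) [MetricSpace Y] [CompactSpace Y] [Nonempty Y]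
    (hconv : Tendsto (fun n => GromovHausdorff.ghDist (X n) Y) atTop (𝓝 0)) :
    IsVernationTree Y :=
  statement19_general fun _ hε =>
    let ⟨n, hn⟩ := (hconv.eventually_lt_const (half_pos hε)).exists
    ⟨X n, inferInstance, hvern n, exists_isApproxIsometry_of_ghDist_lt hn⟩
end
end
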